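/- arXiv:1403.3130 — 3 statements merged into one kernel-verified Lean document; each statement's English description precedes it below -/
import Mathlib

section
/- Let (A, {,}_A, d) be a differential graded Poisson algebra over a field k and (M, ∂) a left differential graded module over the differential graded algebra A^e. Then M is a left differential graded Poisson module over A under a ∗ x := m_a x and {a,x}_M := h_a x for homogeneous a ∈ A, x ∈ M. -/
open scoped TensorProduct

noncomputable section

namespace DGPaper

universe u

/-- A differential graded Lie algebra structure on a `k`-vector space `V`. -/
structure DGLAOn (k : Type u) [Field k] (V : Type u) [AddCommGroup V] [Module k V] where
  gr : ℤ → Submodule k V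
  decomp : DirectSum.Decomposition gr
  br : V →ₗ[k] V →ₗ[k] V
  br_mem : ∀ {i j : ℤ} {a b : V}, a ∈ gr i → b ∈ gr j → br a b ∈ gr (i + j)
  br_antisymm : ∀ {i j : ℤ} {a b : V}, a ∈ gr i → b ∈ gr j →
    br a b = -(((-1 : k) ^ (i * j)) • br b a)
  br_jacobi : ∀ {i j l : ℤ} {a b c : V}, a ∈ gr i → b ∈ gr j → c ∈ gr l →
    br a (br b c) = br (br a b) c + ((-1 : k) ^ (i * j)) • br b (br a c)
  d : V →ₗ[k] V
  d_mem : ∀ {i : ℤ} {a : V}, a ∈ gr i → d a ∈ gr (i + 1)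
  d_sq : ∀ a : V, d (d a) = 0
  d_br : ∀ {i j : ℤ} {a b : V}, a ∈ gr i → b ∈ gr j →
    d (br a b) = br (d a) b + ((-1 : k) ^ i) • br a (d b)

/-- A differential graded (associative, unital) algebra structure on a `k`-vector space `N`. -/
structure DGAOn (k : Type u) [Field k] (N : Type u) [AddCommGroup N] [Module k N] where
  gr : ℤ → Submodule k N
  decomp : DirectSum.Decomposition gr
  mul : N →ₗ[k] N →ₗ[k] N
  one : N
  one_mem : one ∈ gr 0
  mul_mem : ∀ {i j : ℤ} {a b : N}, a ∈ gr i → b ∈ gr j → mul a b ∈ gr (i + j)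
  mul_assoc : ∀ a b c : N, mul (mul a b) c = mul a (mul b c)
  one_mul : ∀ a : N, mul one a = a
  mul_one : ∀ a : N, mul a one = a
  d : N →ₗ[k] N
  d_mem : ∀ {i : ℤ} {a : N}, a ∈ gr i → d a ∈ gr (i + 1)
  d_sq : ∀ a : N, d (d a) = 0
  d_mul : ∀ {i j : ℤ} {a b : N}, a ∈ gr i → b ∈ gr j →
    d (mul a b) = mul (d a) b + ((-1 : k) ^ i) • mul a (d b)

/-- A differential graded Poisson algebra structure on a `k`-vector space `M`. -/
structure DGPAOn (k : Type u) [Field k] (M : Type u) [AddCommGroup M] [Module k M] where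
  gr : ℤ → Submodule k M
  decomp : DirectSum.Decomposition gr
  mul : M →ₗ[k] M →ₗ[k] M
  one : M
  one_mem : one ∈ gr 0
  mul_mem : ∀ {i j : ℤ} {a b : M}, a ∈ gr i → b ∈ gr j → mul a b ∈ gr (i + j)
  mul_assoc : ∀ a b c : M, mul (mul a b) c = mul a (mul b c)
  one_mul : ∀ a : M, mul one a = a
  mul_one : ∀ a : M, mul a one = a
  mul_comm : ∀ {i j : ℤ} {a b : M}, a ∈ gr i → b ∈ gr j →
    mul a b = ((-1 : k) ^ (i * j)) • mul b a
  br : M →ₗ[k] M →ₗ[k] M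
  br_mem : ∀ {i j : ℤ} {a b : M}, a ∈ gr i → b ∈ gr j → br a b ∈ gr (i + j)
  br_antisymm : ∀ {i j : ℤ} {a b : M}, a ∈ gr i → b ∈ gr j →
    br a b = -(((-1 : k) ^ (i * j)) • br b a)
  br_jacobi : ∀ {i j l : ℤ} {a b c : M}, a ∈ gr i → b ∈ gr j → c ∈ gr l →
    br a (br b c) = br (br a b) c + ((-1 : k) ^ (i * j)) • br b (br a c)
  br_deriv : ∀ {i j l : ℤ} {a b c : M}, a ∈ gr i → b ∈ gr j → c ∈ gr l →
    br a (mul b c) = mul (br a b) c + ((-1 : k) ^ (i * j)) • mul b (br a c)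
  d : M →ₗ[k] M
  d_mem : ∀ {i : ℤ} {a : M}, a ∈ gr i → d a ∈ gr (i + 1)
  d_sq : ∀ a : M, d (d a) = 0
  d_br : ∀ {i j : ℤ} {a b : M}, a ∈ gr i → b ∈ gr j →
    d (br a b) = br (d a) b + ((-1 : k) ^ i) • br a (d b)
  d_mul : ∀ {i j : ℤ} {a b : M}, a ∈ gr i → b ∈ gr j →
    d (mul a b) = mul (d a) b + ((-1 : k) ^ i) • mul a (d b)

section Defs

variable {k : Type u} [Field k]

/-- The differential graded Lie algebra underlying a differential graded Poisson algebra. -/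
def DGPAOn.toLie {M : Type u} [AddCommGroup M] [Module k M] (P : DGPAOn k M) :
    DGLAOn k M where
  gr := P.gr
  decomp := P.decomp
  br := P.br
  br_mem := P.br_mem
  br_antisymm := P.br_antisymm
  br_jacobi := P.br_jacobi
  d := P.d
  d_mem := P.d_mem
  d_sq := P.d_sq
  d_br := P.d_br

section Maps

variable {M N : Type u} [AddCommGroup M] [Module k M] [AddCommGroup N] [Module k N]

/-- A morphism of differential graded algebras (degree-0, multiplicative, unital,
commuting with the differentials). -/
def IsDGAHom (E : DGAOn k M) (F : DGAOn k N) (f : M →ₗ[k] N) : Prop :=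
  (∀ {n : ℤ} {x : M}, x ∈ E.gr n → f x ∈ F.gr n) ∧
  (∀ x y : M, f (E.mul x y) = F.mul (f x) (f y)) ∧
  f E.one = F.one ∧
  ∀ x : M, f (E.d x) = F.d (f x)

/-- A morphism of differential graded Poisson algebras. -/
def IsDGPAHom (P : DGPAOn k M) (Q : DGPAOn k N) (f : M →ₗ[k] N) : Prop :=
  (∀ {n : ℤ} {x : M}, x ∈ P.gr n → f x ∈ Q.gr n) ∧
  (∀ x y : M, f (P.mul x y) = Q.mul (f x) (f y)) ∧
  f P.one = Q.one ∧
  (∀ x : M, f (P.d x) = Q.d (f x)) ∧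
  ∀ x y : M, f (P.br x y) = Q.br (f x) (f y)

end Maps

section Tensor

variable {A B : Type u} [AddCommGroup A] [Module k A] [AddCommGroup B] [Module k B]

/-- `R` is the tensor product differential graded Poisson algebra structure on `A ⊗[k] B`
induced by `P` and `Q`. -/
def IsTensorDGPA (P : DGPAOn k A) (Q : DGPAOn k B) (R : DGPAOn k (A ⊗[k] B)) : Prop :=
  (∀ n : ℤ, R.gr n = Submodule.span k {z : A ⊗[k] B |
      ∃ (i j : ℤ) (a : A) (b : B), i + j = n ∧ a ∈ P.gr i ∧ b ∈ Q.gr j ∧ z = a ⊗ₜ[k] b}) ∧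
  R.one = P.one ⊗ₜ[k] Q.one ∧
  (∀ {i j i' j' : ℤ} {a a' : A} {b b' : B},
      a ∈ P.gr i → b ∈ Q.gr j → a' ∈ P.gr i' → b' ∈ Q.gr j' →
    R.mul (a ⊗ₜ[k] b) (a' ⊗ₜ[k] b') = ((-1 : k) ^ (i' * j)) • (P.mul a a' ⊗ₜ[k] Q.mul b b')) ∧
  (∀ {i j : ℤ} {a : A} {b : B}, a ∈ P.gr i → b ∈ Q.gr j →
    R.d (a ⊗ₜ[k] b) = P.d a ⊗ₜ[k] b + ((-1 : k) ^ i) • (a ⊗ₜ[k] Q.d b)) ∧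
  (∀ {i j i' j' : ℤ} {a a' : A} {b b' : B},
      a ∈ P.gr i → b ∈ Q.gr j → a' ∈ P.gr i' → b' ∈ Q.gr j' →
    R.br (a ⊗ₜ[k] b) (a' ⊗ₜ[k] b') =
      ((-1 : k) ^ (i' * j)) • (P.br a a' ⊗ₜ[k] Q.mul b b' + P.mul a a' ⊗ₜ[k] Q.br b b'))

/-- `G` is the tensor product differential graded algebra structure on `A ⊗[k] B`
induced by `E` and `F` (with the Koszul sign rule). -/
def IsTensorDGA (E : DGAOn k A) (F : DGAOn k B) (G : DGAOn k (A ⊗[k] B)) : Prop :=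
  (∀ n : ℤ, G.gr n = Submodule.span k {z : A ⊗[k] B |
      ∃ (i j : ℤ) (x : A) (y : B), i + j = n ∧ x ∈ E.gr i ∧ y ∈ F.gr j ∧ z = x ⊗ₜ[k] y}) ∧
  G.one = E.one ⊗ₜ[k] F.one ∧
  (∀ {i j i' j' : ℤ} {x x' : A} {y y' : B},
      x ∈ E.gr i → y ∈ F.gr j → x' ∈ E.gr i' → y' ∈ F.gr j' →
    G.mul (x ⊗ₜ[k] y) (x' ⊗ₜ[k] y') = ((-1 : k) ^ (i' * j)) • (E.mul x x' ⊗ₜ[k] F.mul y y')) ∧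
  (∀ {i j : ℤ} {x : A} {y : B}, x ∈ E.gr i → y ∈ F.gr j →
    G.d (x ⊗ₜ[k] y) = E.d x ⊗ₜ[k] y + ((-1 : k) ^ i) • (x ⊗ₜ[k] F.d y))

end Tensor

section Env

variable {M : Type u} [AddCommGroup M] [Module k M]

/-- The defining relations of the universal enveloping algebra `A^e` of a differential
graded Poisson algebra, imposed on the tensor algebra of `M × M`; the first copy of `M`
gives the generators `m_a`, the second copy the generators `h_a`. -/
inductive EnvRel (P : DGPAOn k M) :
    TensorAlgebra k (M × M) → TensorAlgebra k (M × M) → Prop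
  | relone : EnvRel P (TensorAlgebra.ι k ((P.one, 0) : M × M)) 1
  | relmul (a b : M) :
      EnvRel P (TensorAlgebra.ι k ((P.mul a b, 0) : M × M))
        (TensorAlgebra.ι k ((a, 0) : M × M) * TensorAlgebra.ι k ((b, 0) : M × M))
  | relhmul {i j : ℤ} {a b : M} (ha : a ∈ P.gr i) (hb : b ∈ P.gr j) :
      EnvRel P (TensorAlgebra.ι k ((0, P.mul a b) : M × M))
        (TensorAlgebra.ι k ((a, 0) : M × M) * TensorAlgebra.ι k ((0, b) : M × M) +
          ((-1 : k) ^ (i * j)) •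
            (TensorAlgebra.ι k ((b, 0) : M × M) * TensorAlgebra.ι k ((0, a) : M × M)))
  | relmbr {i j : ℤ} {a b : M} (ha : a ∈ P.gr i) (hb : b ∈ P.gr j) :
      EnvRel P (TensorAlgebra.ι k ((P.br a b, 0) : M × M))
        (TensorAlgebra.ι k ((0, a) : M × M) * TensorAlgebra.ι k ((b, 0) : M × M) -
          ((-1 : k) ^ (i * j)) •
            (TensorAlgebra.ι k ((b, 0) : M × M) * TensorAlgebra.ι k ((0, a) : M × M)))
  | relhbr {i j : ℤ} {a b : M} (ha : a ∈ P.gr i) (hb : b ∈ P.gr j) :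
      EnvRel P (TensorAlgebra.ι k ((0, P.br a b) : M × M))
        (TensorAlgebra.ι k ((0, a) : M × M) * TensorAlgebra.ι k ((0, b) : M × M) -
          ((-1 : k) ^ (i * j)) •
            (TensorAlgebra.ι k ((0, b) : M × M) * TensorAlgebra.ι k ((0, a) : M × M)))

/-- The universal enveloping algebra `A^e` of a differential graded Poisson algebra,
as a quotient of the tensor algebra on two copies of `A`. -/
abbrev Env (P : DGPAOn k M) : Type u := RingQuot (EnvRel P)

/-- The generators `m_a` of `A^e`. -/
def mgen (P : DGPAOn k M) : M →ₗ[k] Env P :=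
  (RingQuot.mkAlgHom k (EnvRel P)).toLinearMap ∘ₗ
    ((TensorAlgebra.ι k : (M × M) →ₗ[k] TensorAlgebra k (M × M)) ∘ₗ LinearMap.inl k M M)

/-- The generators `h_a` of `A^e`. -/
def hgen (P : DGPAOn k M) : M →ₗ[k] Env P :=
  (RingQuot.mkAlgHom k (EnvRel P)).toLinearMap ∘ₗ
    ((TensorAlgebra.ι k : (M × M) →ₗ[k] TensorAlgebra k (M × M)) ∘ₗ LinearMap.inr k M M)

/-- `E` is the differential graded algebra structure on `A^e`, with the ring
multiplication of `A^e`, grading `|m_a| = |h_a| = |a|` and differential determined by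
`∂(m_a) = m_{d a}`, `∂(h_a) = h_{d a}` and the graded Leibniz rule. -/
def IsEnvDGA (P : DGPAOn k M) (E : DGAOn k (Env P)) : Prop :=
  (∀ x y : Env P, E.mul x y = x * y) ∧
  E.one = 1 ∧
  (∀ {i : ℤ} {a : M}, a ∈ P.gr i → mgen P a ∈ E.gr i) ∧
  (∀ {i : ℤ} {a : M}, a ∈ P.gr i → hgen P a ∈ E.gr i) ∧
  (∀ a : M, E.d (mgen P a) = mgen P (P.d a)) ∧
  (∀ a : M, E.d (hgen P a) = hgen P (P.d a))

end Env

section Lie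

variable {V : Type u} [AddCommGroup V] [Module k V]

/-- The defining relations of the universal enveloping algebra of a differential graded
Lie algebra. -/
inductive LieRel (L : DGLAOn k V) : TensorAlgebra k V → TensorAlgebra k V → Prop
  | rel {i j : ℤ} {a b : V} (ha : a ∈ L.gr i) (hb : b ∈ L.gr j) :
      LieRel L
        (TensorAlgebra.ι k a * TensorAlgebra.ι k b -
          ((-1 : k) ^ (i * j)) • (TensorAlgebra.ι k b * TensorAlgebra.ι k a))
        (TensorAlgebra.ι k (L.br a b))

/-- The universal enveloping algebra `U(L)` of a differential graded Lie algebra `L`. -/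
abbrev ULie (L : DGLAOn k V) : Type u := RingQuot (LieRel L)

/-- The canonical map `L → U(L)`. -/
def uGen (L : DGLAOn k V) : V →ₗ[k] ULie L :=
  (RingQuot.mkAlgHom k (LieRel L)).toLinearMap ∘ₗ TensorAlgebra.ι k

/-- `E` is the differential graded algebra structure of `U(L)`. -/
def IsULieDGA (L : DGLAOn k V) (E : DGAOn k (ULie L)) : Prop :=
  (∀ x y : ULie L, E.mul x y = x * y) ∧
  E.one = 1 ∧
  (∀ {i : ℤ} {a : V}, a ∈ L.gr i → uGen L a ∈ E.gr i) ∧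
  (∀ a : V, E.d (uGen L a) = uGen L (L.d a))

/-- The graded-symmetry relations defining the graded symmetric algebra of `L`. -/
inductive SymRel (L : DGLAOn k V) : TensorAlgebra k V → TensorAlgebra k V → Prop
  | rel {i j : ℤ} {a b : V} (ha : a ∈ L.gr i) (hb : b ∈ L.gr j) :
      SymRel L (TensorAlgebra.ι k a * TensorAlgebra.ι k b)
        (((-1 : k) ^ (i * j)) • (TensorAlgebra.ι k b * TensorAlgebra.ι k a))

/-- The graded symmetric algebra `𝕊L` of a differential graded Lie algebra `L`. -/
abbrev SymAlg (L : DGLAOn k V) : Type u := RingQuot (SymRel L)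

/-- The canonical map `L → 𝕊L`. -/
def sGen (L : DGLAOn k V) : V →ₗ[k] SymAlg L :=
  (RingQuot.mkAlgHom k (SymRel L)).toLinearMap ∘ₗ TensorAlgebra.ι k

/-- `R` is the differential graded Poisson algebra structure on `𝕊L` with differential
extending `d` and bracket extending the Lie bracket of `L` as a graded biderivation. -/
def IsSymDGPA (L : DGLAOn k V) (R : DGPAOn k (SymAlg L)) : Prop :=
  (∀ x y : SymAlg L, R.mul x y = x * y) ∧
  R.one = 1 ∧
  (∀ {i : ℤ} {a : V}, a ∈ L.gr i → sGen L a ∈ R.gr i) ∧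
  (∀ a : V, R.d (sGen L a) = sGen L (L.d a)) ∧
  (∀ a b : V, R.br (sGen L a) (sGen L b) = sGen L (L.br a b))

/-- `S` is the graded semidirect product differential graded Lie algebra `L ⋊ L`. -/
def IsSemidirect (L : DGLAOn k V) (S : DGLAOn k (V × V)) : Prop :=
  (∀ n : ℤ, S.gr n = (L.gr n).prod (L.gr n)) ∧
  (∀ z : V × V, S.d z = (L.d z.1, L.d z.2)) ∧
  (∀ {i j : ℤ} {x₁ x₂ y₁ y₂ : V}, x₁ ∈ L.gr i → x₂ ∈ L.gr i → y₁ ∈ L.gr j → y₂ ∈ L.gr j →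
    S.br (x₁, x₂) (y₁, y₂) =
      (L.br x₂ y₁ - ((-1 : k) ^ (i * j)) • L.br y₂ x₁, L.br x₂ y₂))

end Lie

section Smash

variable {M : Type u} [AddCommGroup M] [Module k M]

/-- The generators `1#(ab) - a#b - (-1)^{|a||b|} b#a` of the ideal defining `A^E`
inside the smash product `A # U(A)`. -/
def smashGens (P : DGPAOn k M) : Set (M ⊗[k] ULie P.toLie) :=
  {z | ∃ (i j : ℤ) (a b : M), a ∈ P.gr i ∧ b ∈ P.gr j ∧
    z = P.one ⊗ₜ[k] uGen P.toLie (P.mul a b) - a ⊗ₜ[k] uGen P.toLie b -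
        ((-1 : k) ^ (i * j)) • (b ⊗ₜ[k] uGen P.toLie a)}

/-- The two-sided ideal generated by a set `T` in a differential graded algebra `S`. -/
def idealGen {N : Type u} [AddCommGroup N] [Module k N] (S : DGAOn k N) (T : Set N) :
    Submodule k N :=
  sInf {I : Submodule k N | T ⊆ I ∧ ∀ x ∈ I, ∀ y : N, S.mul x y ∈ I ∧ S.mul y x ∈ I}

/-- `S` is the smash product differential graded algebra `A # U(A)`. -/
def IsSmash (P : DGPAOn k M) (EU : DGAOn k (ULie P.toLie))
    (S : DGAOn k (M ⊗[k] ULie P.toLie)) : Prop :=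
  S.one = P.one ⊗ₜ[k] (1 : ULie P.toLie) ∧
  (∀ a b : M, S.mul (a ⊗ₜ[k] (1 : ULie P.toLie)) (b ⊗ₜ[k] (1 : ULie P.toLie)) =
      P.mul a b ⊗ₜ[k] (1 : ULie P.toLie)) ∧
  (∀ u v : ULie P.toLie, S.mul (P.one ⊗ₜ[k] u) (P.one ⊗ₜ[k] v) = P.one ⊗ₜ[k] (u * v)) ∧
  (∀ (a : M) (u : ULie P.toLie), S.mul (a ⊗ₜ[k] (1 : ULie P.toLie)) (P.one ⊗ₜ[k] u) =
      a ⊗ₜ[k] u) ∧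
  (∀ {i j : ℤ} {c b : M}, c ∈ P.gr i → b ∈ P.gr j →
    S.mul (P.one ⊗ₜ[k] uGen P.toLie c) (b ⊗ₜ[k] (1 : ULie P.toLie)) =
      P.br c b ⊗ₜ[k] (1 : ULie P.toLie) + ((-1 : k) ^ (i * j)) • (b ⊗ₜ[k] uGen P.toLie c)) ∧
  (∀ {i j : ℤ} {a : M} {u : ULie P.toLie}, a ∈ P.gr i → u ∈ EU.gr j →
      a ⊗ₜ[k] u ∈ S.gr (i + j)) ∧
  (∀ {i : ℤ} {a : M}, a ∈ P.gr i → ∀ u : ULie P.toLie,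
    S.d (a ⊗ₜ[k] u) = P.d a ⊗ₜ[k] u + ((-1 : k) ^ i) • (a ⊗ₜ[k] EU.d u))

/-- `R` is the quotient differential graded algebra structure of `S` by the ideal `I`. -/
def IsQuotDGA {N : Type u} [AddCommGroup N] [Module k N] (S : DGAOn k N)
    (I : Submodule k N) (R : DGAOn k (N ⧸ I)) : Prop :=
  (∀ n : ℤ, R.gr n = Submodule.map I.mkQ (S.gr n)) ∧
  R.one = I.mkQ S.one ∧
  (∀ x y : N, R.mul (I.mkQ x) (I.mkQ y) = I.mkQ (S.mul x y)) ∧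
  (∀ x : N, R.d (I.mkQ x) = I.mkQ (S.d x))

end Smash

section Op

variable {M N : Type u} [AddCommGroup M] [Module k M] [AddCommGroup N] [Module k N]

/-- `P'` is the opposite differential graded Poisson algebra of `P` (the product is
unchanged by graded commutativity, the bracket is negated). -/
def IsOpDGPA (P P' : DGPAOn k M) : Prop :=
  P'.gr = P.gr ∧ (∀ x y : M, P'.mul x y = P.mul x y) ∧ P'.one = P.one ∧ P'.d = P.d ∧
  (∀ x y : M, P'.br x y = - P.br x y)

/-- `E'` is the opposite differential graded algebra of `E` (with the Koszul sign). -/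
def IsOpDGA (E E' : DGAOn k N) : Prop :=
  E'.gr = E.gr ∧ E'.one = E.one ∧ E'.d = E.d ∧
  (∀ {i j : ℤ} {x y : N}, x ∈ E.gr i → y ∈ E.gr j →
    E'.mul x y = ((-1 : k) ^ (i * j)) • E.mul y x)

end Op

section UEnv

variable {M N : Type u} [AddCommGroup M] [Module k M] [AddCommGroup N] [Module k N]

/-- A pair `(f, g)` where `f : A → D` is a differential graded algebra map and
`g : A → D_L` is a differential graded Lie algebra map (into the graded commutator Lie
structure of `D`), satisfying the two compatibility conditions of the universal property
of the universal enveloping algebra of a differential graded Poisson algebra. -/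
def UEPair (P : DGPAOn k M) (D : DGAOn k N) (f g : M →ₗ[k] N) : Prop :=
  (∀ {n : ℤ} {x : M}, x ∈ P.gr n → f x ∈ D.gr n) ∧
  (∀ {n : ℤ} {x : M}, x ∈ P.gr n → g x ∈ D.gr n) ∧
  (∀ a b : M, f (P.mul a b) = D.mul (f a) (f b)) ∧
  f P.one = D.one ∧
  (∀ a : M, f (P.d a) = D.d (f a)) ∧
  (∀ a : M, g (P.d a) = D.d (g a)) ∧
  (∀ {i j : ℤ} {a b : M}, a ∈ P.gr i → b ∈ P.gr j →
    g (P.br a b) = D.mul (g a) (g b) - ((-1 : k) ^ (i * j)) • D.mul (g b) (g a)) ∧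
  (∀ {i j : ℤ} {a b : M}, a ∈ P.gr i → b ∈ P.gr j →
    f (P.br a b) = D.mul (g a) (f b) - ((-1 : k) ^ (i * j)) • D.mul (f b) (g a)) ∧
  (∀ {i j : ℤ} {a b : M}, a ∈ P.gr i → b ∈ P.gr j →
    g (P.mul a b) = D.mul (f a) (g b) + ((-1 : k) ^ (i * j)) • D.mul (f b) (g a))

/-- `(E, α, β)` is a universal enveloping algebra of the differential graded Poisson
algebra `P`. -/
def IsUEnv (P : DGPAOn k M) (E : DGAOn k N) (α β : M →ₗ[k] N) : Prop :=
  UEPair P E α β ∧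
  ∀ (D' : Type u) [AddCommGroup D'] [Module k D'] (D : DGAOn k D') (f g : M →ₗ[k] D'),
    UEPair P D f g →
    ∃! φ : N →ₗ[k] D',
      IsDGAHom E D φ ∧ (∀ a : M, φ (α a) = f a) ∧ (∀ a : M, φ (β a) = g a)

end UEnv

section IdealsQuotients

variable {M : Type u} [AddCommGroup M] [Module k M]

/-- `B` is a differential graded Poisson ideal of `P`. -/
def IsDGPIdeal (P : DGPAOn k M) (B : Submodule k M) : Prop :=
  (B = ⨆ n : ℤ, B ⊓ P.gr n) ∧
  (∀ x ∈ B, P.d x ∈ B) ∧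
  (∀ x ∈ B, ∀ a : M, P.mul x a ∈ B) ∧
  (∀ x ∈ B, ∀ a : M, P.mul a x ∈ B) ∧
  (∀ x ∈ B, ∀ a : M, P.br a x ∈ B)

/-- `B` is a differential graded Poisson subalgebra of `P`. -/
def IsDGPSubalg (P : DGPAOn k M) (B : Submodule k M) : Prop :=
  (B = ⨆ n : ℤ, B ⊓ P.gr n) ∧ P.one ∈ B ∧
  (∀ x ∈ B, ∀ y ∈ B, P.mul x y ∈ B) ∧
  (∀ x ∈ B, P.d x ∈ B) ∧
  (∀ x ∈ B, ∀ y ∈ B, P.br x y ∈ B)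

/-- `R` is the quotient differential graded Poisson algebra structure on `M ⧸ B`. -/
def IsQuotDGPA (P : DGPAOn k M) (B : Submodule k M) (R : DGPAOn k (M ⧸ B)) : Prop :=
  (∀ n : ℤ, R.gr n = Submodule.map B.mkQ (P.gr n)) ∧
  R.one = B.mkQ P.one ∧
  (∀ x y : M, R.mul (B.mkQ x) (B.mkQ y) = B.mkQ (P.mul x y)) ∧
  (∀ x : M, R.d (B.mkQ x) = B.mkQ (P.d x)) ∧
  (∀ x y : M, R.br (B.mkQ x) (B.mkQ y) = B.mkQ (P.br x y))

/-- `S` is the differential graded Poisson algebra structure induced on a differential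
graded Poisson subalgebra `B` of `P`. -/
def IsSubDGPA (P : DGPAOn k M) (B : Submodule k M) (S : DGPAOn k B) : Prop :=
  (∀ n : ℤ, S.gr n = Submodule.comap B.subtype (P.gr n)) ∧
  ((S.one : M) = P.one) ∧
  (∀ x y : B, (S.mul x y : M) = P.mul (x : M) (y : M)) ∧
  (∀ x : B, (S.d x : M) = P.d (x : M)) ∧
  (∀ x y : B, (S.br x y : M) = P.br (x : M) (y : M))

/-- The cocycles `ker d` of a differential graded Poisson algebra. -/
def Cocycles (P : DGPAOn k M) : Submodule k M := LinearMap.ker P.d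

/-- The coboundaries `im d`, viewed inside the cocycles. -/
def CobIn (P : DGPAOn k M) : Submodule k (Cocycles P) :=
  Submodule.comap (Cocycles P).subtype (LinearMap.range P.d)

/-- The cohomology `H(A) = ker d / im d` of a differential graded Poisson algebra. -/
abbrev Cohom (P : DGPAOn k M) : Type u := Cocycles P ⧸ CobIn P

/-- The class map `ker d → H(A)`. -/
def cohCls (P : DGPAOn k M) : Cocycles P →ₗ[k] Cohom P := (CobIn P).mkQ

/-- `R` is the graded Poisson algebra structure on the cohomology of `P` (a differential
graded Poisson algebra structure with zero differential, with the induced grading,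
product and bracket). -/
def IsCohomDGPA (P : DGPAOn k M) (R : DGPAOn k (Cohom P)) : Prop :=
  R.d = 0 ∧
  (∀ n : ℤ, R.gr n =
    Submodule.map (cohCls P) (Submodule.comap (Cocycles P).subtype (P.gr n))) ∧
  (∀ h : P.one ∈ Cocycles P, R.one = cohCls P ⟨P.one, h⟩) ∧
  (∀ (a b : Cocycles P) (h : P.mul (a : M) (b : M) ∈ Cocycles P),
    R.mul (cohCls P a) (cohCls P b) = cohCls P ⟨P.mul (a : M) (b : M), h⟩) ∧
  (∀ (a b : Cocycles P) (h : P.br (a : M) (b : M) ∈ Cocycles P),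
    R.br (cohCls P a) (cohCls P b) = cohCls P ⟨P.br (a : M) (b : M), h⟩)

end IdealsQuotients

end Defs

section ModuleDefs

variable {k : Type u} [Field k]

/-- A left differential graded module structure on `X` over the differential graded
algebra `E`. -/
structure DGModOn {N : Type u} [AddCommGroup N] [Module k N] (E : DGAOn k N)
    (X : Type u) [AddCommGroup X] [Module k X] where
  grm : ℤ → Submodule k X
  decomp : DirectSum.Decomposition grm
  act : N →ₗ[k] X →ₗ[k] X
  act_one : ∀ x : X, act E.one x = x
  act_mul : ∀ (r s : N) (x : X), act (E.mul r s) x = act r (act s x)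
  act_mem : ∀ {i j : ℤ} {r : N} {x : X}, r ∈ E.gr i → x ∈ grm j → act r x ∈ grm (i + j)
  dm : X →ₗ[k] X
  dm_mem : ∀ {i : ℤ} {x : X}, x ∈ grm i → dm x ∈ grm (i + 1)
  dm_sq : ∀ x : X, dm (dm x) = 0
  dm_act : ∀ {i : ℤ} {r : N}, r ∈ E.gr i → ∀ x : X,
    dm (act r x) = act (E.d r) x + ((-1 : k) ^ i) • act r (dm x)

/-- A left differential graded Poisson module structure on `X` over the differential
graded Poisson algebra `P`. -/
structure DGPModOn {M : Type u} [AddCommGroup M] [Module k M] (P : DGPAOn k M)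
    (X : Type u) [AddCommGroup X] [Module k X] where
  grm : ℤ → Submodule k X
  decomp : DirectSum.Decomposition grm
  act : M →ₗ[k] X →ₗ[k] X
  act_one : ∀ x : X, act P.one x = x
  act_mul : ∀ (a b : M) (x : X), act (P.mul a b) x = act a (act b x)
  act_mem : ∀ {i j : ℤ} {a : M} {x : X}, a ∈ P.gr i → x ∈ grm j → act a x ∈ grm (i + j)
  dm : X →ₗ[k] X
  dm_mem : ∀ {i : ℤ} {x : X}, x ∈ grm i → dm x ∈ grm (i + 1)
  dm_sq : ∀ x : X, dm (dm x) = 0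
  dm_act : ∀ {i : ℤ} {a : M}, a ∈ P.gr i → ∀ x : X,
    dm (act a x) = act (P.d a) x + ((-1 : k) ^ i) • act a (dm x)
  bact : M →ₗ[k] X →ₗ[k] X
  bact_mem : ∀ {i j : ℤ} {a : M} {x : X}, a ∈ P.gr i → x ∈ grm j → bact a x ∈ grm (i + j)
  bact_amod : ∀ {i j : ℤ} {a b : M}, a ∈ P.gr i → b ∈ P.gr j → ∀ x : X,
    bact a (act b x) = act (P.br a b) x + ((-1 : k) ^ (i * j)) • act b (bact a x)
  bact_mulact : ∀ {i j : ℤ} {a b : M}, a ∈ P.gr i → b ∈ P.gr j → ∀ x : X,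
    bact (P.mul a b) x = act a (bact b x) + ((-1 : k) ^ (i * j)) • act b (bact a x)
  bact_jacobi : ∀ {i j : ℤ} {a b : M}, a ∈ P.gr i → b ∈ P.gr j → ∀ x : X,
    bact a (bact b x) = bact (P.br a b) x + ((-1 : k) ^ (i * j)) • bact b (bact a x)
  dm_bact : ∀ {i : ℤ} {a : M}, a ∈ P.gr i → ∀ x : X,
    dm (bact a x) = bact (P.d a) x + ((-1 : k) ^ i) • bact a (dm x)

/-- A morphism of left differential graded modules. -/
def IsDGModHom {N X Y : Type u} [AddCommGroup N] [Module k N]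
    [AddCommGroup X] [Module k X] [AddCommGroup Y] [Module k Y]
    {E : DGAOn k N} (W : DGModOn E X) (W' : DGModOn E Y) (f : X →ₗ[k] Y) : Prop :=
  (∀ {n : ℤ} {x : X}, x ∈ W.grm n → f x ∈ W'.grm n) ∧
  (∀ x : X, f (W.dm x) = W'.dm (f x)) ∧
  (∀ (r : N) (x : X), f (W.act r x) = W'.act r (f x))

/-- A morphism of left differential graded Poisson modules. -/
def IsDGPModHom {M X Y : Type u} [AddCommGroup M] [Module k M]
    [AddCommGroup X] [Module k X] [AddCommGroup Y] [Module k Y]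
    {P : DGPAOn k M} (V : DGPModOn P X) (V' : DGPModOn P Y) (f : X →ₗ[k] Y) : Prop :=
  (∀ {n : ℤ} {x : X}, x ∈ V.grm n → f x ∈ V'.grm n) ∧
  (∀ x : X, f (V.dm x) = V'.dm (f x)) ∧
  (∀ (a : M) (x : X), f (V.act a x) = V'.act a (f x)) ∧
  (∀ (a : M) (x : X), f (V.bact a x) = V'.bact a (f x))

/-- The correspondence between a differential graded Poisson module structure over `P`
and a differential graded module structure over `A^e` on the same space. -/
def ModCorr {M X : Type u} [AddCommGroup M] [Module k M] [AddCommGroup X] [Module k X]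
    {P : DGPAOn k M} {E : DGAOn k (Env P)}
    (V : DGPModOn P X) (W : DGModOn E X) : Prop :=
  W.grm = V.grm ∧ W.dm = V.dm ∧
  (∀ (a : M) (x : X), W.act (mgen P a) x = V.act a x) ∧
  (∀ (a : M) (x : X), W.act (hgen P a) x = V.bact a x)

end ModuleDefs

section Stmt11Helpers

variable {k : Type u} [Field k] {M : Type u} [AddCommGroup M] [Module k M]

theorem mgen_one (P : DGPAOn k M) : mgen P P.one = 1 :=
  (RingQuot.mkAlgHom_rel k (EnvRel.relone (P := P))).trans (map_one _)

theorem mgen_mul (P : DGPAOn k M) (a b : M) :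
    mgen P (P.mul a b) = mgen P a * mgen P b :=
  (RingQuot.mkAlgHom_rel k (EnvRel.relmul (P := P) a b)).trans (map_mul _ _ _)

theorem hgen_mul (P : DGPAOn k M) {i j : ℤ} {a b : M} (ha : a ∈ P.gr i) (hb : b ∈ P.gr j) :
    hgen P (P.mul a b) =
      mgen P a * hgen P b + ((-1 : k) ^ (i * j)) • (mgen P b * hgen P a) := by
  refine (RingQuot.mkAlgHom_rel k (EnvRel.relhmul (P := P) ha hb)).trans ?_
  rw [map_add, map_smul, map_mul, map_mul]
  rfl

theorem mgen_br (P : DGPAOn k M) {i j : ℤ} {a b : M} (ha : a ∈ P.gr i) (hb : b ∈ P.gr j) :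
    mgen P (P.br a b) =
      hgen P a * mgen P b - ((-1 : k) ^ (i * j)) • (mgen P b * hgen P a) := by
  refine (RingQuot.mkAlgHom_rel k (EnvRel.relmbr (P := P) ha hb)).trans ?_
  rw [map_sub, map_smul, map_mul, map_mul]
  rfl

theorem hgen_br (P : DGPAOn k M) {i j : ℤ} {a b : M} (ha : a ∈ P.gr i) (hb : b ∈ P.gr j) :
    hgen P (P.br a b) =
      hgen P a * hgen P b - ((-1 : k) ^ (i * j)) • (hgen P b * hgen P a) := by
  refine (RingQuot.mkAlgHom_rel k (EnvRel.relhbr (P := P) ha hb)).trans ?_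
  rw [map_sub, map_smul, map_mul, map_mul]
  rfl

end Stmt11Helpers

/-- every left differential graded module over `A^e` becomes a left
differential graded Poisson module over `A` under `a ∗ x = m_a x` and `{a,x} = h_a x`. -/
theorem stmt_11 (k : Type u) [Field k] (M X : Type u)
    [AddCommGroup M] [Module k M] [AddCommGroup X] [Module k X]
    (P : DGPAOn k M) (E : DGAOn k (Env P)) (hE : IsEnvDGA P E)
    (W : DGModOn E X) :
    ∃ V : DGPModOn P X, ModCorr V W := by
  obtain ⟨hmul, hone, hm, hh, hdm, hdh⟩ := hE
  have act_mul : ∀ (r s : Env P) (x : X), W.act (r * s) x = W.act r (W.act s x) := by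
    intro r s x
    rw [← hmul, W.act_mul]
  refine ⟨{
    grm := W.grm
    decomp := W.decomp
    act := W.act ∘ₗ mgen P
    act_one := ?_
    act_mul := ?_
    act_mem := ?_
    dm := W.dm
    dm_mem := W.dm_mem
    dm_sq := W.dm_sq
    dm_act := ?_
    bact := W.act ∘ₗ hgen P
    bact_mem := ?_
    bact_amod := ?_
    bact_mulact := ?_
    bact_jacobi := ?_
    dm_bact := ?_ }, rfl, rfl, fun _ _ => rfl, fun _ _ => rfl⟩
  · intro x
    rw [LinearMap.comp_apply, mgen_one, ← hone, W.act_one]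
  · intro a b x
    simp only [LinearMap.comp_apply]
    rw [mgen_mul, act_mul]
  · intro i j a x ha hx
    exact W.act_mem (hm ha) hx
  · intro i a ha x
    simp only [LinearMap.comp_apply]
    rw [W.dm_act (hm ha), hdm]
  · intro i j a x ha hx
    exact W.act_mem (hh ha) hx
  · intro i j a b ha hb x
    simp only [LinearMap.comp_apply]
    rw [mgen_br P ha hb, map_sub, map_smul, LinearMap.sub_apply, LinearMap.smul_apply,
      act_mul, act_mul, sub_add_cancel]
  · intro i j a b ha hb x
    simp only [LinearMap.comp_apply]
    rw [hgen_mul P ha hb, map_add, map_smul, LinearMap.add_apply, LinearMap.smul_apply,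
      act_mul, act_mul]
  · intro i j a b ha hb x
    simp only [LinearMap.comp_apply]
    rw [hgen_br P ha hb, map_sub, map_smul, LinearMap.sub_apply, LinearMap.smul_apply,
      act_mul, act_mul, sub_add_cancel]
  · intro i a ha x
    simp only [LinearMap.comp_apply]
    rw [W.dm_act (hh ha), hdh]

end DGPaper

end
end

section
/- Let A be a differential graded Poisson algebra over a field k. Then the category DGP(A) of left differential graded Poisson modules over A is isomorphic to the category DG(A^e) of left differential graded modules over the differential graded algebra A^e; the isomorphism is given on objects by the mutually inverse assignments m_a·x = ax, h_a·x = {a,x}_M (resp. a∗x = m_a x, {a,x}_M = h_a x) and is the identity on underlying maps of morphisms. -/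
open scoped TensorProduct

noncomputable section

namespace DGPaper

universe u

section Proof

variable {k : Type u} [Field k] {M : Type u} [AddCommGroup M] [Module k M]

theorem env_induction (P : DGPAOn k M) {C : Env P → Prop}
    (halg : ∀ c : k, C (algebraMap k (Env P) c))
    (hm : ∀ a, C (mgen P a)) (hh : ∀ a, C (hgen P a))
    (hadd : ∀ r s, C r → C s → C (r + s)) (hmul : ∀ r s, C r → C s → C (r * s))
    (r : Env P) : C r := by
  obtain ⟨t, rfl⟩ := RingQuot.mkAlgHom_surjective k (EnvRel P) r
  induction t using TensorAlgebra.induction with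
  | algebraMap c => rw [AlgHom.commutes]; exact halg c
  | ι z =>
    have hz : z = LinearMap.inl k M M z.1 + LinearMap.inr k M M z.2 := by simp
    rw [hz, map_add, map_add]
    exact hadd _ _ (hm z.1) (hh z.2)
  | mul a b ha hb => rw [map_mul]; exact hmul _ _ ha hb
  | add a b ha hb => rw [map_add]; exact hadd _ _ ha hb

theorem mem_iSup_of_gen (P : DGPAOn k M) (f : M →ₗ[k] Env P) (G : ℤ → Submodule k (Env P))
    (h : ∀ (i : ℤ) (a : M), a ∈ P.gr i → f a ∈ G i) (a : M) : f a ∈ ⨆ i, G i := by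
  letI := P.decomp
  have ha : a ∈ ⨆ i, P.gr i := by
    rw [(DirectSum.Decomposition.isInternal P.gr).submodule_iSup_eq_top]; trivial
  induction ha using Submodule.iSup_induction' with
  | mem i x hx => exact Submodule.mem_iSup_of_mem i (h i x hx)
  | zero => rw [map_zero]; exact zero_mem _
  | add x y _ _ hx hy => rw [map_add]; exact add_mem hx hy

theorem gr_le_good (P : DGPAOn k M) (E : DGAOn k (Env P)) 
    (G : ℤ → Submodule k (Env P)) (hG : ∀ i, G i ≤ E.gr i)
    (hone : (1 : Env P) ∈ G 0)
    (hmul : ∀ (i j : ℤ) (r s : Env P), r ∈ G i → s ∈ G j → r * s ∈ G (i + j))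
    (hm : ∀ (i : ℤ) (a : M), a ∈ P.gr i → mgen P a ∈ G i)
    (hh : ∀ (i : ℤ) (a : M), a ∈ P.gr i → hgen P a ∈ G i)
    (i : ℤ) : E.gr i ≤ G i := by
  have key : ∀ r : Env P, r ∈ ⨆ i, G i := by
    intro r
    induction r using env_induction P with
    | halg c =>
      rw [Algebra.algebraMap_eq_smul_one]
      exact Submodule.smul_mem _ _ (Submodule.mem_iSup_of_mem 0 hone)
    | hm a => exact mem_iSup_of_gen P _ G hm a
    | hh a => exact mem_iSup_of_gen P _ G hh a
    | hadd r s hr hs => exact add_mem hr hs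
    | hmul r s hr hs =>
      induction hr using Submodule.iSup_induction' with
      | mem i x hx =>
        induction hs using Submodule.iSup_induction' with
        | mem j y hy => exact Submodule.mem_iSup_of_mem (i + j) (hmul i j x y hx hy)
        | zero => rw [mul_zero]; exact zero_mem _
        | add y z _ _ hy hz => rw [mul_add]; exact add_mem hy hz
      | zero => rw [zero_mul]; exact zero_mem _
      | add y z _ _ hy hz => rw [add_mul]; exact add_mem hy hz
  letI := E.decomp
  have proj : ∀ r : Env P, (DirectSum.decompose E.gr r i : Env P) ∈ G i := by
    intro r
    have hr := key r
    induction hr using Submodule.iSup_induction' with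
    | mem j x hx =>
      by_cases hij : j = i
      · subst hij
        rw [DirectSum.decompose_of_mem_same _ (hG _ hx)]; exact hx
      · rw [DirectSum.decompose_of_mem_ne _ (hG _ hx) hij]; exact zero_mem _
    | zero => simp
    | add x y _ _ hx hy =>
      rw [DirectSum.decompose_add, DirectSum.add_apply, Submodule.coe_add]
      exact add_mem hx hy
  intro r hr
  have := proj r
  rwa [DirectSum.decompose_of_mem_same _ hr] at this

variable {X : Type u} [AddCommGroup X] [Module k X]

/-- The map on the tensor algebra given by a Poisson module structure. -/
def preRep {P : DGPAOn k M} (V : DGPModOn P X) :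
    TensorAlgebra k (M × M) →ₐ[k] Module.End k X :=
  TensorAlgebra.lift k (LinearMap.coprod (V.act : M →ₗ[k] Module.End k X) V.bact)

theorem preRep_m {P : DGPAOn k M} (V : DGPModOn P X) (a : M) :
    preRep V (TensorAlgebra.ι k ((a, 0) : M × M)) = V.act a := by
  simp [preRep]

theorem preRep_h {P : DGPAOn k M} (V : DGPModOn P X) (a : M) :
    preRep V (TensorAlgebra.ι k ((0, a) : M × M)) = V.bact a := by
  simp [preRep]

/-- The representation of `A^e` given by a Poisson module structure. -/
def rep {P : DGPAOn k M} (V : DGPModOn P X) : Env P →ₐ[k] Module.End k X :=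
  RingQuot.liftAlgHom k ⟨preRep V, by
    intro x y h
    cases h with
    | relone =>
      rw [preRep_m, map_one]; ext x; exact V.act_one x
    | relmul a b =>
      rw [map_mul, preRep_m, preRep_m, preRep_m]; ext x; exact V.act_mul a b x
    | relhmul ha hb =>
      rw [map_add, map_smul, map_mul, map_mul, preRep_m, preRep_m, preRep_h, preRep_h, preRep_h]
      ext x; exact V.bact_mulact ha hb x
    | relmbr ha hb =>
      rw [map_sub, map_smul, map_mul, map_mul, preRep_m, preRep_m, preRep_h]
      ext x; exact eq_sub_of_add_eq (V.bact_amod ha hb x).symm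
    | relhbr ha hb =>
      rw [map_sub, map_smul, map_mul, map_mul, preRep_h, preRep_h, preRep_h]
      ext x; exact eq_sub_of_add_eq (V.bact_jacobi ha hb x).symm⟩

theorem rep_m {P : DGPAOn k M} (V : DGPModOn P X) (a : M) : rep V (mgen P a) = V.act a :=
  (RingQuot.liftAlgHom_mkAlgHom_apply k _ _ _).trans (preRep_m V a)

theorem rep_h {P : DGPAOn k M} (V : DGPModOn P X) (a : M) : rep V (hgen P a) = V.bact a :=
  (RingQuot.liftAlgHom_mkAlgHom_apply k _ _ _).trans (preRep_h V a)

/-- The elements of degree `i` of `A^e` acting homogeneously and compatibly with the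
differentials. -/
def good {P : DGPAOn k M} (E : DGAOn k (Env P)) (V : DGPModOn P X) (i : ℤ) :
    Submodule k (Env P) where
  carrier := {r | r ∈ E.gr i ∧ (∀ (j : ℤ) (x : X), x ∈ V.grm j → rep V r x ∈ V.grm (i + j)) ∧
    ∀ x : X, V.dm (rep V r x) = rep V (E.d r) x + ((-1 : k) ^ i) • rep V r (V.dm x)}
  zero_mem' := by
    refine ⟨zero_mem _, fun j x _ => ?_, fun x => ?_⟩ <;> simp
  add_mem' := by
    rintro r s ⟨h1, h2, h3⟩ ⟨h1', h2', h3'⟩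
    refine ⟨add_mem h1 h1', fun j x hx => ?_, fun x => ?_⟩
    · rw [map_add]; exact add_mem (h2 j x hx) (h2' j x hx)
    · simp only [map_add, LinearMap.add_apply, h3, h3', smul_add]; abel
  smul_mem' := by
    rintro c r ⟨h1, h2, h3⟩
    refine ⟨Submodule.smul_mem _ _ h1, fun j x hx => ?_, fun x => ?_⟩
    · rw [map_smul]; exact Submodule.smul_mem _ _ (h2 j x hx)
    · simp only [map_smul, LinearMap.smul_apply, h3, smul_add]
      rw [smul_comm c]

theorem d_one {N : Type u} [AddCommGroup N] [Module k N] (E : DGAOn k N) : E.d E.one = 0 := by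
  have h := E.d_mul E.one_mem E.one_mem
  rw [E.mul_one, E.one_mul, E.mul_one, zpow_zero, one_smul] at h
  simpa using h

theorem gr_le_good' {P : DGPAOn k M} (E : DGAOn k (Env P)) (hE : IsEnvDGA P E)
    (V : DGPModOn P X) (i : ℤ) : E.gr i ≤ good E V i := by
  obtain ⟨emul, eone, em, eh, edm, edh⟩ := hE
  refine gr_le_good P E (good E V) (fun i r hr => hr.1) ?_ ?_ ?_ ?_ i
  · refine ⟨eone ▸ E.one_mem, fun j x hx => ?_, fun x => ?_⟩
    · simpa using hx
    · have := d_one E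
      rw [eone] at this
      simp [this]
  · rintro i j r s ⟨h1, h2, h3⟩ ⟨h1', h2', h3'⟩
    refine ⟨emul r s ▸ E.mul_mem h1 h1', fun l x hx => ?_, fun x => ?_⟩
    · rw [map_mul, add_assoc]; exact h2 _ _ (h2' _ _ hx)
    · have hd := E.d_mul h1 h1'
      simp only [emul] at hd
      rw [hd]
      simp only [map_add, map_mul, map_smul, Module.End.mul_apply, LinearMap.add_apply,
        LinearMap.smul_apply, h3, h3', smul_add]
      rw [zpow_add₀ (by simp : (-1 : k) ≠ 0), mul_smul, add_assoc]
  · intro i a ha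
    refine ⟨em ha, fun j x hx => ?_, fun x => ?_⟩
    · rw [rep_m]; exact V.act_mem ha hx
    · rw [edm, rep_m, rep_m]; exact V.dm_act ha x
  · intro i a ha
    refine ⟨eh ha, fun j x hx => ?_, fun x => ?_⟩
    · rw [rep_h]; exact V.bact_mem ha hx
    · rw [edh, rep_h, rep_h]; exact V.dm_bact ha x

/-- From Poisson modules to `A^e`-modules. -/
def toMod {P : DGPAOn k M} (E : DGAOn k (Env P)) (hE : IsEnvDGA P E)
    (V : DGPModOn P X) : DGModOn E X where
  grm := V.grm
  decomp := V.decomp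
  act := (rep V).toLinearMap
  act_one := fun x => by rw [hE.2.1]; simp
  act_mul := fun r s x => by rw [hE.1]; simp
  act_mem := fun hr hx => (gr_le_good' E hE V _ hr).2.1 _ _ hx
  dm := V.dm
  dm_mem := V.dm_mem
  dm_sq := V.dm_sq
  dm_act := fun hr x => (gr_le_good' E hE V _ hr).2.2 x

/-- From `A^e`-modules to Poisson modules. -/
def toPMod {P : DGPAOn k M} (E : DGAOn k (Env P)) (hE : IsEnvDGA P E)
    (W : DGModOn E X) : DGPModOn P X where
  grm := W.grm
  decomp := W.decomp
  act := W.act ∘ₗ mgen P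
  act_one := fun x => by
    rw [LinearMap.comp_apply, mgen_one, ← hE.2.1]; exact W.act_one x
  act_mul := fun a b x => by
    simp only [LinearMap.comp_apply]
    rw [mgen_mul, ← hE.1]; exact W.act_mul _ _ x
  act_mem := fun ha hx => W.act_mem (hE.2.2.1 ha) hx
  dm := W.dm
  dm_mem := W.dm_mem
  dm_sq := W.dm_sq
  dm_act := fun ha x => by
    have := W.dm_act (hE.2.2.1 ha) x
    rwa [hE.2.2.2.2.1] at this
  bact := W.act ∘ₗ hgen P
  bact_mem := fun ha hx => W.act_mem (hE.2.2.2.1 ha) hx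
  bact_amod := fun ha hb x => by
    simp only [LinearMap.comp_apply]
    rw [mgen_br P ha hb, ← hE.1, ← hE.1]
    simp [W.act_mul]
  bact_mulact := fun ha hb x => by
    simp only [LinearMap.comp_apply]
    rw [hgen_mul P ha hb, ← hE.1, ← hE.1]
    simp [W.act_mul]
  bact_jacobi := fun ha hb x => by
    simp only [LinearMap.comp_apply]
    rw [hgen_br P ha hb, ← hE.1, ← hE.1]
    simp [W.act_mul]
  dm_bact := fun ha x => by
    have := W.dm_act (hE.2.2.2.1 ha) x
    rwa [hE.2.2.2.2.2] at this

theorem DGModOn.ext' {N : Type u} [AddCommGroup N] [Module k N] {E : DGAOn k N}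
    {W W' : DGModOn E X} (h1 : W.grm = W'.grm) (h2 : W.act = W'.act) (h3 : W.dm = W'.dm) :
    W = W' := by
  cases W; cases W'
  dsimp only at h1 h2 h3
  subst h1 h2 h3
  congr 1
  exact Subsingleton.elim _ _

theorem DGPModOn.ext' {P : DGPAOn k M}
    {V V' : DGPModOn P X} (h1 : V.grm = V'.grm) (h2 : V.act = V'.act) (h3 : V.dm = V'.dm)
    (h4 : V.bact = V'.bact) : V = V' := by
  cases V; cases V'
  dsimp only at h1 h2 h3 h4
  subst h1 h2 h3 h4
  congr 1
  exact Subsingleton.elim _ _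

theorem intertwine {P : DGPAOn k M} {E : DGAOn k (Env P)} (hE : IsEnvDGA P E)
    {Y : Type u} [AddCommGroup Y] [Module k Y] (W : DGModOn E X) (W' : DGModOn E Y)
    (f : X →ₗ[k] Y)
    (hm : ∀ a x, f (W.act (mgen P a) x) = W'.act (mgen P a) (f x))
    (hh : ∀ a x, f (W.act (hgen P a) x) = W'.act (hgen P a) (f x))
    (r : Env P) : ∀ x, f (W.act r x) = W'.act r (f x) := by
  induction r using env_induction P with
  | halg c =>
    intro x
    rw [Algebra.algebraMap_eq_smul_one, ← hE.2.1]
    simp [W.act_one, W'.act_one]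
  | hm a => exact hm a
  | hh a => exact hh a
  | hadd r s hr hs => intro x; simp [hr, hs]
  | hmul r s hr hs =>
    intro x
    rw [← hE.1, W.act_mul, W'.act_mul, hr, hs]

end Proof

/-- the category of left differential graded Poisson modules over `A` is
isomorphic to the category of left differential graded modules over `A^e`: the
correspondences `m_a·x = ax, h_a·x = {a,x}` and `a∗x = m_a x, {a,x} = h_a x` are
mutually inverse bijections on objects, and a linear map is a morphism of differential
graded Poisson modules iff it is a morphism of the corresponding differential graded
`A^e`-modules (the functors are the identity on underlying maps). -/
theorem stmt_12 (k : Type u) [Field k] (M : Type u) [AddCommGroup M] [Module k M]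
    (P : DGPAOn k M) (E : DGAOn k (Env P)) (hE : IsEnvDGA P E) :
    (∀ (X : Type u) [AddCommGroup X] [Module k X] (V : DGPModOn P X),
      ∃! W : DGModOn E X, ModCorr V W) ∧
    (∀ (X : Type u) [AddCommGroup X] [Module k X] (W : DGModOn E X),
      ∃! V : DGPModOn P X, ModCorr V W) ∧
    (∀ (X Y : Type u) [AddCommGroup X] [Module k X] [AddCommGroup Y] [Module k Y]
        (V : DGPModOn P X) (V' : DGPModOn P Y) (W : DGModOn E X) (W' : DGModOn E Y),
      ModCorr V W → ModCorr V' W' →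
      ∀ f : X →ₗ[k] Y, IsDGPModHom V V' f ↔ IsDGModHom W W' f) := by
  refine ⟨?_, ?_, ?_⟩
  · intro X _ _ V
    refine ⟨toMod E hE V, ⟨rfl, rfl, fun a x => ?_, fun a x => ?_⟩, ?_⟩
    · exact LinearMap.congr_fun (rep_m V a) x
    · exact LinearMap.congr_fun (rep_h V a) x
    · rintro W ⟨h1, h2, h3, h4⟩
      refine DGModOn.ext' h1 ?_ h2
      ext r x
      refine intertwine hE W (toMod E hE V) LinearMap.id ?_ ?_ r x
      · intro a x
        exact (h3 a x).trans (LinearMap.congr_fun (rep_m V a) x).symm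
      · intro a x
        exact (h4 a x).trans (LinearMap.congr_fun (rep_h V a) x).symm
  · intro X _ _ W
    refine ⟨toPMod E hE W, ⟨rfl, rfl, fun a x => rfl, fun a x => rfl⟩, ?_⟩
    rintro V ⟨h1, h2, h3, h4⟩
    refine DGPModOn.ext' h1.symm ?_ h2.symm ?_
    · ext a x; exact (h3 a x).symm
    · ext a x; exact (h4 a x).symm
  · rintro X Y _ _ _ _ V V' W W' ⟨h1, h2, h3, h4⟩ ⟨h1', h2', h3', h4'⟩ f
    constructor
    · rintro ⟨g1, g2, g3, g4⟩
      refine ⟨fun {n x} hx => ?_, fun x => ?_, fun r x => ?_⟩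
      · rw [h1']; rw [h1] at hx; exact g1 hx
      · rw [h2, h2']; exact g2 x
      · refine intertwine hE W W' f (fun a x => ?_) (fun a x => ?_) r x
        · rw [h3, h3', g3]
        · rw [h4, h4', g4]
    · rintro ⟨g1, g2, g3⟩
      refine ⟨fun {n x} hx => ?_, fun x => ?_, fun a x => ?_, fun a x => ?_⟩
      · rw [← h1']; rw [← h1] at hx; exact g1 hx
      · rw [← h2, ← h2']; exact g2 x
      · rw [← h3, ← h3', g3]
      · rw [← h4, ← h4', g3]

end DGPaper

end
end

section
/- Let (L, [,]_L, d) be a differential graded Lie algebra over a field k and 𝕊L its graded symmetric algebra, regarded as a differential graded Poisson algebra with bracket extending [,]_L as a graded biderivation. Then (𝕊L)^e ≅ U(L⋊L) as differential graded algebras, where L⋊L is the graded semidirect product DG Lie algebra and U denotes the universal enveloping algebra of a DG Lie algebra. -/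
open scoped TensorProduct

noncomputable section

namespace DGPaper

universe u

section Helpers

variable {k : Type u} [Field k]

lemma sgn_cases (n : ℤ) : ((-1 : k) ^ n) = 1 ∨ ((-1 : k) ^ n) = -1 := by
  rcases Int.even_or_odd n with h | h
  · left; exact h.neg_one_zpow
  · right; exact h.neg_one_zpow

lemma sgn_add (m n : ℤ) : ((-1 : k) ^ (m + n)) = (-1) ^ m * (-1) ^ n :=
  zpow_add₀ (by simp) m n

/-- The operator scaling each homogeneous piece. -/
lemma exists_scale {N : Type u} [AddCommGroup N] [Module k N] (gr : ℤ → Submodule k N)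
    (D : DirectSum.Decomposition gr) (c : ℤ → k) :
    ∃ f : N →ₗ[k] N, ∀ i x, x ∈ gr i → f x = c i • x := by
  let := D
  refine ⟨(DirectSum.toModule k ℤ N (fun i => c i • (gr i).subtype)) ∘ₗ
    (DirectSum.decomposeLinearEquiv gr).toLinearMap, ?_⟩
  intro i x hx
  have : DirectSum.decomposeLinearEquiv gr x = DirectSum.lof k ℤ (fun i => gr i) i ⟨x, hx⟩ :=
    DirectSum.decompose_of_mem gr hx
  simp [this]

lemma left_ind {A : Type u} [Ring A] [Algebra k A] {W : Type u} [AddCommGroup W] [Module k W]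
    (g : W →ₗ[k] A) (hgen : Algebra.adjoin k (Set.range g) = ⊤) (N : Submodule k A)
    (h1 : (1 : A) ∈ N) (hs : ∀ x b, b ∈ N → g x * b ∈ N) (a : A) : a ∈ N := by
  have key : ∀ b ∈ N, a * b ∈ N := by
    have ha : a ∈ Algebra.adjoin k (Set.range g) := by rw [hgen]; trivial
    induction ha using Algebra.adjoin_induction with
    | mem x hx => obtain ⟨w, rfl⟩ := hx; exact hs w
    | algebraMap r => intro b hb; rw [← Algebra.smul_def]; exact N.smul_mem r hb
    | add x y _ _ hx hy => intro b hb; rw [add_mul]; exact N.add_mem (hx b hb) (hy b hb)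
    | mul x y _ _ hx hy => intro b hb; rw [mul_assoc]; exact hx _ (hy b hb)
  simpa using key 1 h1

lemma gr_ind {A : Type u} [Ring A] [Algebra k A] (gr : ℤ → Submodule k A)
    (D : DirectSum.Decomposition gr) (one_mem : (1 : A) ∈ gr 0)
    (mul_mem : ∀ {i j : ℤ} {a b : A}, a ∈ gr i → b ∈ gr j → a * b ∈ gr (i + j))
    {W : Type u} [AddCommGroup W] [Module k W] (grW : ℤ → Submodule k W)
    (DW : DirectSum.Decomposition grW)
    (g : W →ₗ[k] A) (hg : ∀ {i x}, x ∈ grW i → g x ∈ gr i)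
    (hgen : Algebra.adjoin k (Set.range g) = ⊤) (Q : ℤ → Submodule k A)
    (h1 : (1 : A) ∈ Q 0)
    (hstep : ∀ i j x b, x ∈ grW i → b ∈ gr j → b ∈ Q j → g x * b ∈ Q (i + j)) :
    ∀ i x, x ∈ gr i → x ∈ Q i := by
  let := D
  let := DW
  -- the submodule of elements all of whose components satisfy `Q`
  let N : Submodule k A := ⨆ i, (Q i ⊓ gr i)
  have hN : ∀ a, a ∈ N := by
    refine left_ind g hgen N ?_ ?_
    · exact Submodule.mem_iSup_of_mem 0 ⟨h1, one_mem⟩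
    · intro x b hb
      induction x using DirectSum.Decomposition.inductionOn grW with
      | zero => simp
      | add x y hx hy => rw [map_add, add_mul]; exact N.add_mem hx hy
      | @homogeneous i x =>
        induction hb using Submodule.iSup_induction' with
        | zero => simp
        | add y z _ _ hy hz => rw [mul_add]; exact N.add_mem hy hz
        | mem j y hy =>
          exact Submodule.mem_iSup_of_mem (i + j)
            ⟨hstep i j x y x.2 hy.2 hy.1, mul_mem (hg x.2) hy.2⟩
  have comp : ∀ a ∈ N, ∀ i, (DirectSum.decompose gr a i : A) ∈ Q i := by
    intro a ha
    induction ha using Submodule.iSup_induction' with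
    | zero => intro i; simp
    | add y z _ _ hy hz =>
      intro i; rw [DirectSum.decompose_add]; simpa using (Q i).add_mem (hy i) (hz i)
    | mem j y hy =>
      intro i
      by_cases h : j = i
      · subst h; rw [DirectSum.decompose_of_mem_same gr hy.2]; exact hy.1
      · rw [DirectSum.decompose_of_mem_ne gr hy.2 h]; exact (Q i).zero_mem
  intro i x hx
  have := comp x (hN x) i
  rwa [DirectSum.decompose_of_mem_same gr hx] at this

lemma hom_top {A : Type u} [AddCommGroup A] [Module k A] (gr : ℤ → Submodule k A)
    (D : DirectSum.Decomposition gr) (N : Submodule k A) (h : ∀ i x, x ∈ gr i → x ∈ N) (a : A) :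
    a ∈ N := by
  let := D
  induction a using DirectSum.Decomposition.inductionOn gr with
  | zero => simp
  | add x y hx hy => exact N.add_mem hx hy
  | @homogeneous i x => exact h i x x.2

lemma quot_adjoin {W : Type u} [AddCommGroup W] [Module k W]
    (r : TensorAlgebra k W → TensorAlgebra k W → Prop) :
    Algebra.adjoin k (Set.range
      ((RingQuot.mkAlgHom k r).toLinearMap ∘ₗ TensorAlgebra.ι k : W →ₗ[k] RingQuot r)) = ⊤ := by
  have h : Set.range ((RingQuot.mkAlgHom k r).toLinearMap ∘ₗ TensorAlgebra.ι k :
      W →ₗ[k] RingQuot r) = (RingQuot.mkAlgHom k r) '' Set.range (TensorAlgebra.ι k) := by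
    rw [← Set.range_comp]; rfl
  rw [h, ← AlgHom.map_adjoin, TensorAlgebra.adjoin_range_ι, Algebra.map_top,
    AlgHom.range_eq_top]
  exact RingQuot.mkAlgHom_surjective k r

lemma quot_hom_ext {W : Type u} [AddCommGroup W] [Module k W]
    {r : TensorAlgebra k W → TensorAlgebra k W → Prop} {B : Type u} [Ring B] [Algebra k B]
    (f g : RingQuot r →ₐ[k] B)
    (h : ∀ x, f (RingQuot.mkAlgHom k r (TensorAlgebra.ι k x)) =
      g (RingQuot.mkAlgHom k r (TensorAlgebra.ι k x))) : f = g := by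
  apply RingQuot.ringQuot_ext'
  apply TensorAlgebra.hom_ext
  ext x
  exact h x

lemma quot_lift {W : Type u} [AddCommGroup W] [Module k W]
    {r : TensorAlgebra k W → TensorAlgebra k W → Prop} {B : Type u} [Ring B] [Algebra k B]
    (f : W →ₗ[k] B)
    (h : ∀ x y, r x y → TensorAlgebra.lift k f x = TensorAlgebra.lift k f y) :
    ∃ F : RingQuot r →ₐ[k] B, ∀ x, F (RingQuot.mkAlgHom k r (TensorAlgebra.ι k x)) = f x := by
  refine ⟨RingQuot.liftAlgHom k ⟨TensorAlgebra.lift k f, fun x y => h x y⟩, fun x => ?_⟩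
  rw [RingQuot.liftAlgHom_mkAlgHom_apply, TensorAlgebra.lift_ι_apply]

section Abstract

variable {A U W : Type u} [Ring A] [Algebra k A] [Ring U] [Algebra k U] [AddCommGroup W]
  [Module k W]

lemma abs_derivL (gr : ℤ → Submodule k A)
    (mul_mem : ∀ {i j : ℤ} {a b : A}, a ∈ gr i → b ∈ gr j → a * b ∈ gr (i + j))
    (comm : ∀ {i j : ℤ} {a b : A}, a ∈ gr i → b ∈ gr j → a * b = ((-1 : k) ^ (i * j)) • (b * a))
    (br : A →ₗ[k] A →ₗ[k] A)
    (br_mem : ∀ {i j : ℤ} {a b : A}, a ∈ gr i → b ∈ gr j → br a b ∈ gr (i + j))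
    (br_anti : ∀ {i j : ℤ} {a b : A}, a ∈ gr i → b ∈ gr j →
      br a b = -(((-1 : k) ^ (i * j)) • br b a))
    (br_deriv : ∀ {i j l : ℤ} {a b c : A}, a ∈ gr i → b ∈ gr j → c ∈ gr l →
      br a (b * c) = br a b * c + ((-1 : k) ^ (i * j)) • (b * br a c))
    {i j l : ℤ} {a b c : A} (ha : a ∈ gr i) (hb : b ∈ gr j) (hc : c ∈ gr l) :
    br (a * b) c = a * br b c + ((-1 : k) ^ (i * j)) • (b * br a c) := by
  have hcm := comm (br_mem ha hc) hb
  rw [br_anti (mul_mem ha hb) hc, br_deriv hc ha hb, br_anti hc ha,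
      br_anti hc hb, add_mul, sgn_add, mul_comm l i, mul_comm l j]
  rw [add_mul, sgn_add, mul_comm l j] at hcm
  rcases sgn_cases (k := k) (i * l) with h1 | h1 <;>
  rcases sgn_cases (k := k) (j * l) with h2 | h2 <;>
  rcases sgn_cases (k := k) (i * j) with h3 | h3 <;>
  · simp only [h1, h2, h3, one_smul, neg_smul, neg_neg, mul_neg, neg_mul, mul_one, neg_add] at hcm ⊢
    simp only [hcm]
    abel

lemma abs_relations (gr : ℤ → Submodule k A)
    (D : DirectSum.Decomposition gr) (one_mem : (1 : A) ∈ gr 0)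
    (mul_mem : ∀ {i j : ℤ} {a b : A}, a ∈ gr i → b ∈ gr j → a * b ∈ gr (i + j))
    (comm : ∀ {i j : ℤ} {a b : A}, a ∈ gr i → b ∈ gr j → a * b = ((-1 : k) ^ (i * j)) • (b * a))
    (br : A →ₗ[k] A →ₗ[k] A)
    (br_mem : ∀ {i j : ℤ} {a b : A}, a ∈ gr i → b ∈ gr j → br a b ∈ gr (i + j))
    (br_anti : ∀ {i j : ℤ} {a b : A}, a ∈ gr i → b ∈ gr j →
      br a b = -(((-1 : k) ^ (i * j)) • br b a))
    (br_deriv : ∀ {i j l : ℤ} {a b c : A}, a ∈ gr i → b ∈ gr j → c ∈ gr l →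
      br a (b * c) = br a b * c + ((-1 : k) ^ (i * j)) • (b * br a c))
    (grW : ℤ → Submodule k W) (DW : DirectSum.Decomposition grW)
    (g : W →ₗ[k] A) (hg : ∀ {i x}, x ∈ grW i → g x ∈ gr i)
    (hgen : Algebra.adjoin k (Set.range g) = ⊤)
    (m : A →ₐ[k] U) (H : A →ₗ[k] U) (H1 : H 1 = 0)
    (Hx : ∀ {i j : ℤ} {x : W} {b : A}, x ∈ grW i → b ∈ gr j →
      H (g x * b) = m (g x) * H b + ((-1 : k) ^ (i * j)) • (m b * H (g x)))
    (hqp : ∀ {i j : ℤ} {x y : W}, x ∈ grW i → y ∈ grW j →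
      m (br (g x) (g y)) = H (g x) * m (g y) - ((-1 : k) ^ (i * j)) • (m (g y) * H (g x)))
    (hqq : ∀ {i j : ℤ} {x y : W}, x ∈ grW i → y ∈ grW j →
      H (br (g x) (g y)) = H (g x) * H (g y) - ((-1 : k) ^ (i * j)) • (H (g y) * H (g x))) :
    (∀ {i j : ℤ} {a b : A}, a ∈ gr i → b ∈ gr j →
      H (a * b) = m a * H b + ((-1 : k) ^ (i * j)) • (m b * H a)) ∧
    (∀ {i j : ℤ} {a b : A}, a ∈ gr i → b ∈ gr j →
      m (br a b) = H a * m b - ((-1 : k) ^ (i * j)) • (m b * H a)) ∧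
    (∀ {i j : ℤ} {a b : A}, a ∈ gr i → b ∈ gr j →
      H (br a b) = H a * H b - ((-1 : k) ^ (i * j)) • (H b * H a)) := by
  have ind := gr_ind gr D one_mem mul_mem grW DW g hg hgen
  have derivL : ∀ {i j l : ℤ} {a b c : A}, a ∈ gr i → b ∈ gr j → c ∈ gr l →
      br (a * b) c = a * br b c + ((-1 : k) ^ (i * j)) • (b * br a c) :=
    abs_derivL gr mul_mem comm br br_mem br_anti br_deriv
  have br_one : ∀ {i : ℤ} {a : A}, a ∈ gr i → br a 1 = 0 := by
    intro i a ha
    have := br_deriv ha one_mem one_mem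
    simpa using this
  have one_br : ∀ {i : ℤ} {a : A}, a ∈ gr i → br 1 a = 0 := by
    intro i a ha
    rw [br_anti one_mem ha, br_one ha]; simp
  have mcomm : ∀ {i j : ℤ} {a b : A}, a ∈ gr i → b ∈ gr j →
      m a * m b = ((-1 : k) ^ (i * j)) • (m b * m a) := by
    intro i j a b ha hb
    rw [← map_mul, comm ha hb, map_smul, map_mul]
  have rel1 : ∀ {i j : ℤ} {a b : A}, a ∈ gr i → b ∈ gr j →
      H (a * b) = m a * H b + ((-1 : k) ^ (i * j)) • (m b * H a) := by
    intro i j a b ha hb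
    refine ind (fun i => LinearMap.eqLocus (H ∘ₗ LinearMap.mulRight k b)
      (LinearMap.mulRight k (H b) ∘ₗ m.toLinearMap +
        ((-1 : k) ^ (i * j)) • (LinearMap.mulLeft k (m b) ∘ₗ H))) ?_ ?_ i a ha
    · simp [H1]
    · intro i l x c hx hc h
      simp only [LinearMap.mem_eqLocus, LinearMap.comp_apply, LinearMap.mulRight_apply,
        LinearMap.add_apply, LinearMap.smul_apply, LinearMap.mulLeft_apply,
        AlgHom.toLinearMap_apply] at h ⊢
      have e1 := mcomm hb (hg hx)
      have e2 := mcomm hc hb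
      rw [mul_assoc, Hx hx (mul_mem hc hb), Hx hx hc, h, map_mul, map_mul]
      simp only [mul_add, mul_smul_comm, ← mul_assoc, add_mul, sgn_add]
      rw [e1, e2, mul_comm j i]
      rcases sgn_cases (k := k) (i * j) with h1 | h1 <;>
      rcases sgn_cases (k := k) (i * l) with h2 | h2 <;>
      rcases sgn_cases (k := k) (l * j) with h3 | h3 <;>
      · simp only [h1, h2, h3, one_smul, neg_smul, neg_neg, mul_neg, neg_mul, mul_one, neg_add,
          smul_add, smul_neg, mul_assoc]
        abel
  have rel2R : ∀ {i j l : ℤ} {a b c : A}, a ∈ gr i → b ∈ gr j → c ∈ gr l →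
      m (br a b) = H a * m b - ((-1 : k) ^ (i * j)) • (m b * H a) →
      m (br a c) = H a * m c - ((-1 : k) ^ (i * l)) • (m c * H a) →
      m (br a (b * c)) = H a * m (b * c) - ((-1 : k) ^ (i * (j + l))) • (m (b * c) * H a) := by
    intro i j l a b c ha hb hc h1 h2
    rw [br_deriv ha hb hc]
    simp only [map_add, map_smul, map_mul, h1, h2, mul_add, sgn_add]
    rcases sgn_cases (k := k) (i * j) with h1 | h1 <;>
    rcases sgn_cases (k := k) (i * l) with h2 | h2 <;>
    · simp only [h1, h2, one_smul, neg_smul, neg_neg, mul_neg, mul_one]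
      noncomm_ring
  have rel2L : ∀ {i j l : ℤ} {a b c : A}, a ∈ gr i → b ∈ gr j → c ∈ gr l →
      m (br a c) = H a * m c - ((-1 : k) ^ (i * l)) • (m c * H a) →
      m (br b c) = H b * m c - ((-1 : k) ^ (j * l)) • (m c * H b) →
      m (br (a * b) c) = H (a * b) * m c - ((-1 : k) ^ ((i + j) * l)) • (m c * H (a * b)) := by
    intro i j l a b c ha hb hc h1 h2
    have e1 := mcomm hc ha
    have e2 := mcomm hc hb
    rw [derivL ha hb hc, rel1 ha hb]
    simp only [map_add, map_smul, map_mul, h1, h2, mul_add, add_mul, sgn_add, mul_smul_comm,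
      ← mul_assoc, e1, e2, mul_comm l]
    rcases sgn_cases (k := k) (i * j) with h1 | h1 <;>
    rcases sgn_cases (k := k) (i * l) with h2 | h2 <;>
    rcases sgn_cases (k := k) (j * l) with h3 | h3 <;>
    · simp only [h1, h2, h3, one_smul, neg_smul, neg_neg, mul_neg, mul_one]
      noncomm_ring
  have rel2x : ∀ {i j : ℤ} {x : W} {b : A}, x ∈ grW i → b ∈ gr j →
      m (br (g x) b) = H (g x) * m b - ((-1 : k) ^ (i * j)) • (m b * H (g x)) := by
    intro i j x b hx hb
    refine ind (fun j => LinearMap.eqLocus (m.toLinearMap ∘ₗ br (g x))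
      (LinearMap.mulLeft k (H (g x)) ∘ₗ m.toLinearMap -
        ((-1 : k) ^ (i * j)) • (LinearMap.mulRight k (H (g x)) ∘ₗ m.toLinearMap))) ?_ ?_ j b hb
    · simp [br_one (hg hx)]
    · intro j l y c hy hc h
      exact rel2R (hg hx) (hg hy) hc (hqp hx hy) h
  have rel2 : ∀ {i j : ℤ} {a b : A}, a ∈ gr i → b ∈ gr j →
      m (br a b) = H a * m b - ((-1 : k) ^ (i * j)) • (m b * H a) := by
    intro i j a b ha hb
    refine ind (fun i => LinearMap.eqLocus (m.toLinearMap ∘ₗ br.flip b)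
      (LinearMap.mulRight k (m b) ∘ₗ H -
        ((-1 : k) ^ (i * j)) • (LinearMap.mulLeft k (m b) ∘ₗ H))) ?_ ?_ i a ha
    · simp [one_br hb, H1]
    · intro i l y c hy hc h
      exact rel2L (hg hy) hc hb (rel2x hy hb) h
  have rel3R : ∀ {i j l : ℤ} {a b c : A}, a ∈ gr i → b ∈ gr j → c ∈ gr l →
      H (br a b) = H a * H b - ((-1 : k) ^ (i * j)) • (H b * H a) →
      H (br a c) = H a * H c - ((-1 : k) ^ (i * l)) • (H c * H a) →
      H (br a (b * c)) = H a * H (b * c) - ((-1 : k) ^ (i * (j + l))) • (H (b * c) * H a) := by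
    intro i j l a b c ha hb hc h1 h2
    rw [br_deriv ha hb hc, map_add, map_smul, rel1 (br_mem ha hb) hc, rel1 hb (br_mem ha hc),
      rel1 hb hc, h1, h2, rel2 ha hb, rel2 ha hc]
    simp only [mul_add, add_mul, sgn_add, mul_comm j i]
    rcases sgn_cases (k := k) (i * j) with h1 | h1 <;>
    rcases sgn_cases (k := k) (i * l) with h2 | h2 <;>
    rcases sgn_cases (k := k) (j * l) with h3 | h3 <;>
    · simp only [h1, h2, h3, one_smul, neg_smul, neg_neg, mul_neg, mul_one]
      noncomm_ring
  have rel3x : ∀ {i j : ℤ} {x : W} {b : A}, x ∈ grW i → b ∈ gr j →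
      H (br (g x) b) = H (g x) * H b - ((-1 : k) ^ (i * j)) • (H b * H (g x)) := by
    intro i j x b hx hb
    refine ind (fun j => LinearMap.eqLocus (H ∘ₗ br (g x))
      (LinearMap.mulLeft k (H (g x)) ∘ₗ H -
        ((-1 : k) ^ (i * j)) • (LinearMap.mulRight k (H (g x)) ∘ₗ H))) ?_ ?_ j b hb
    · simp [br_one (hg hx), H1]
    · intro j l y c hy hc h
      exact rel3R (hg hx) (hg hy) hc (hqq hx hy) h
  have rel3 : ∀ {i j : ℤ} {a b : A}, a ∈ gr i → b ∈ gr j →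
      H (br a b) = H a * H b - ((-1 : k) ^ (i * j)) • (H b * H a) := by
    intro i j a b ha hb
    refine ind (fun j => LinearMap.eqLocus (H ∘ₗ br a)
      (LinearMap.mulLeft k (H a) ∘ₗ H -
        ((-1 : k) ^ (i * j)) • (LinearMap.mulRight k (H a) ∘ₗ H))) ?_ ?_ j b hb
    · simp [br_one ha, H1]
    · intro j l y c hy hc h
      refine rel3R ha (hg hy) hc ?_ h
      rw [br_anti ha (hg hy), map_neg, map_smul, rel3x hy ha, mul_comm j i]
      rcases sgn_cases (k := k) (i * j) with h1 | h1 <;>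
      · simp only [h1, one_smul, neg_smul]
        abel
  exact ⟨rel1, rel2, rel3⟩

end Abstract

/-- The core construction: a pair of maps on `L` satisfying the relations of `L ⋊ L` extends
to the enveloping algebra of the symmetric Poisson algebra. -/
lemma core {V : Type u} [AddCommGroup V] [Module k V] (L : DGLAOn k V)
    (R : DGPAOn k (SymAlg L)) (hR : IsSymDGPA L R)
    {U : Type u} [Ring U] [Algebra k U] (p q : V →ₗ[k] U)
    (hpp : ∀ {i j : ℤ} {x y : V}, x ∈ L.gr i → y ∈ L.gr j →
      p x * p y = ((-1 : k) ^ (i * j)) • (p y * p x))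
    (hqp : ∀ {i j : ℤ} {x y : V}, x ∈ L.gr i → y ∈ L.gr j →
      p (L.br x y) = q x * p y - ((-1 : k) ^ (i * j)) • (p y * q x))
    (hqq : ∀ {i j : ℤ} {x y : V}, x ∈ L.gr i → y ∈ L.gr j →
      q (L.br x y) = q x * q y - ((-1 : k) ^ (i * j)) • (q y * q x)) :
    ∃ ψ : Env R →ₐ[k] U, ∀ x, ψ (mgen R (sGen L x)) = p x ∧ ψ (hgen R (sGen L x)) = q x := by
  obtain ⟨Rmul, Rone, Rgen, Rd, Rbr⟩ := hR
  have one_mem : (1 : SymAlg L) ∈ R.gr 0 := Rone ▸ R.one_mem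
  have mul_mem : ∀ {i j : ℤ} {a b : SymAlg L}, a ∈ R.gr i → b ∈ R.gr j →
      a * b ∈ R.gr (i + j) := by
    intro i j a b ha hb; rw [← Rmul]; exact R.mul_mem ha hb
  have mul_comm' : ∀ {i j : ℤ} {a b : SymAlg L}, a ∈ R.gr i → b ∈ R.gr j →
      a * b = ((-1 : k) ^ (i * j)) • (b * a) := by
    intro i j a b ha hb; rw [← Rmul, ← Rmul]; exact R.mul_comm ha hb
  have hgen : Algebra.adjoin k (Set.range (sGen L)) = ⊤ := quot_adjoin _
  -- the map m
  obtain ⟨m, hm⟩ : ∃ m : SymAlg L →ₐ[k] U, ∀ x, m (sGen L x) = p x := by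
    refine quot_lift p ?_
    rintro _ _ ⟨ha, hb⟩
    simpa using hpp ha hb
  -- the map H
  obtain ⟨H, H1, Hx⟩ : ∃ H : SymAlg L →ₗ[k] U, H 1 = 0 ∧
      ∀ {i j : ℤ} {x : V} {b : SymAlg L}, x ∈ L.gr i → b ∈ R.gr j →
        H (sGen L x * b) = p x * H b + ((-1 : k) ^ (i * j)) • (m b * q x) := by
    obtain ⟨σ, hσ⟩ := exists_scale R.gr R.decomp (fun i => (-1 : k) ^ i)
    obtain ⟨ev, hev⟩ := exists_scale L.gr L.decomp (fun i => if Even i then (1 : k) else 0)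
    obtain ⟨od, hod⟩ := exists_scale L.gr L.decomp (fun i => if Even i then (0 : k) else 1)
    let K : V →ₗ[k] SymAlg L →ₗ[k] U :=
      ((LinearMap.mul k U).compl₁₂ m.toLinearMap (q ∘ₗ ev)).flip +
      ((LinearMap.mul k U).compl₁₂ (m.toLinearMap ∘ₗ σ) (q ∘ₗ od)).flip
    have hK : ∀ {i j : ℤ} {x : V} {b : SymAlg L}, x ∈ L.gr i → b ∈ R.gr j →
        K x b = ((-1 : k) ^ (i * j)) • (m b * q x) := by
      intro i j x b hx hb
      have : K x b = m b * q (ev x) + m (σ b) * q (od x) := rfl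
      rw [this, hev i x hx, hod i x hx, hσ j b hb]
      by_cases h : Even i
      · have : Even (i * j) := h.mul_right j
        simp [h, this.neg_one_zpow]
      · have ho : Odd i := Int.not_even_iff_odd.mp h
        have : (-1 : k) ^ (i * j) = (-1) ^ j := by rw [zpow_mul, ho.neg_one_zpow]
        simp [h, this]
    let A := SymAlg L
    let T : V →ₗ[k] Module.End k (A × U) :=
      { toFun := fun x => LinearMap.prod (LinearMap.mulLeft k (sGen L x) ∘ₗ LinearMap.fst k A U)
          (LinearMap.mulLeft k (p x) ∘ₗ LinearMap.snd k A U + K x ∘ₗ LinearMap.fst k A U)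
        map_add' := by
          intro x y
          apply LinearMap.ext; rintro ⟨b, u⟩
          simp [add_mul]; abel
        map_smul' := by
          intro c x
          apply LinearMap.ext; rintro ⟨b, u⟩
          simp }
    have hT : ∀ x b u, T x (b, u) = (sGen L x * b, p x * u + K x b) := fun x b u => rfl
    obtain ⟨F, hF⟩ : ∃ F : SymAlg L →ₐ[k] Module.End k (A × U), ∀ x, F (sGen L x) = T x := by
      refine quot_lift (B := Module.End k (A × U)) T ?_
      rintro _ _ ⟨ha, hb⟩
      rename_i i j x y
      simp only [map_mul, map_smul, TensorAlgebra.lift_ι_apply]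
      apply LinearMap.prod_ext
      · apply LinearMap.ext
        intro b
        refine hom_top R.gr R.decomp (N := LinearMap.eqLocus
          ((T x * T y) ∘ₗ LinearMap.inl k A U)
          ((((-1 : k) ^ (i * j)) • (T y * T x)) ∘ₗ LinearMap.inl k A U)) ?_ b
        intro l b hl
        have e1 : sGen L x * sGen L y = ((-1 : k) ^ (i * j)) • (sGen L y * sGen L x) :=
          mul_comm' (Rgen ha) (Rgen hb)
        simp only [LinearMap.mem_eqLocus, LinearMap.comp_apply, LinearMap.inl_apply,
          Module.End.mul_apply, LinearMap.smul_apply, hT, Prod.smul_mk]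
        refine Prod.ext ?_ ?_
        · change sGen L x * (sGen L y * b) = ((-1 : k) ^ (i * j)) • (sGen L y * (sGen L x * b))
          rw [← mul_assoc, e1, smul_mul_assoc, mul_assoc]
        · change p x * (p y * 0 + K y b) + K x (sGen L y * b) =
            ((-1 : k) ^ (i * j)) • (p y * (p x * 0 + K x b) + K y (sGen L x * b))
          rw [hK ha hl, hK hb hl, hK ha (mul_mem (Rgen hb) hl), hK hb (mul_mem (Rgen ha) hl),
            map_mul, map_mul, hm, hm]
          simp only [mul_add, sgn_add, mul_comm j i]
          rcases sgn_cases (k := k) (i * j) with h1 | h1 <;>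
          rcases sgn_cases (k := k) (i * l) with h2 | h2 <;>
          rcases sgn_cases (k := k) (j * l) with h3 | h3 <;>
          · simp only [h1, h2, h3, one_smul, neg_smul, neg_neg, mul_neg, mul_one]
            noncomm_ring
      · apply LinearMap.ext
        intro u
        simp only [LinearMap.comp_apply, LinearMap.inr_apply,
          Module.End.mul_apply, LinearMap.smul_apply, hT, Prod.smul_mk, map_zero, add_zero,
          mul_zero, smul_zero]
        rw [← mul_assoc, hpp ha hb, smul_mul_assoc, mul_assoc]
    have fst : ∀ a, (F a (1, 0)).1 = a := by
      intro a
      refine left_ind (sGen L) hgen (LinearMap.eqLocus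
        (LinearMap.fst k A U ∘ₗ LinearMap.applyₗ (1, 0) ∘ₗ F.toLinearMap) LinearMap.id) ?_ ?_ a
      · simp
      · intro x b hb
        simp only [LinearMap.mem_eqLocus, LinearMap.comp_apply, LinearMap.applyₗ_apply_apply,
          AlgHom.toLinearMap_apply, LinearMap.fst_apply, LinearMap.id_apply] at hb ⊢
        rw [map_mul, hF, Module.End.mul_apply]
        change sGen L x * (F b (1, 0)).1 = _
        rw [hb]
    refine ⟨LinearMap.snd k A U ∘ₗ LinearMap.applyₗ (1, 0) ∘ₗ F.toLinearMap, by simp, ?_⟩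
    intro i j x b hx hb
    simp only [LinearMap.comp_apply, LinearMap.applyₗ_apply_apply,
          AlgHom.toLinearMap_apply, LinearMap.snd_apply]
    rw [map_mul, hF, Module.End.mul_apply]
    change p x * (F b (1, 0)).2 + K x (F b (1, 0)).1 = _
    rw [fst, hK hx hb]
  have Hg : ∀ x, H (sGen L x) = q x := by
    intro x
    refine hom_top L.gr L.decomp (LinearMap.eqLocus (H ∘ₗ sGen L) q) ?_ x
    intro i x hx
    have := Hx hx one_mem
    simpa [H1] using this
  obtain ⟨r1, r2, r3⟩ := abs_relations R.gr R.decomp one_mem mul_mem mul_comm' R.br R.br_mem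
    R.br_antisymm (fun ha hb hc => by
      have := R.br_deriv ha hb hc
      simpa only [Rmul] using this) L.gr L.decomp (sGen L) Rgen hgen m H H1
    (by intro i j x b hx hb; rw [hm, Hg]; exact Hx hx hb)
    (by intro i j x y hx hy; rw [Rbr, hm, hm, Hg]; exact hqp hx hy)
    (by intro i j x y hx hy; rw [Rbr, Hg, Hg, Hg]; exact hqq hx hy)
  obtain ⟨ψ, hψ⟩ : ∃ ψ : Env R →ₐ[k] U, ∀ z,
      ψ (RingQuot.mkAlgHom k (EnvRel R) (TensorAlgebra.ι k z)) =
        (m.toLinearMap.coprod H) z := by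
    refine quot_lift (m.toLinearMap.coprod H) ?_
    rintro _ _ (_ | ⟨a, b⟩ | ⟨ha, hb⟩ | ⟨ha, hb⟩ | ⟨ha, hb⟩)
    · simp [Rone]
    · simp [Rmul]
    · simpa [Rmul] using r1 ha hb
    · simpa using r2 ha hb
    · simpa using r3 ha hb
  refine ⟨ψ, fun x => ⟨?_, ?_⟩⟩
  · refine (hψ (sGen L x, 0)).trans ?_
    simp [hm]
  · refine (hψ (0, sGen L x)).trans ?_
    simp [Hg]

lemma sign_ident {B : Type u} [Ring B] [Algebra k B] (e : k) (he : e = 1 ∨ e = -1)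
    (a b c d : B) (h : a * b = e • (b * a)) :
    (a + c) * (b + d) - e • ((b + d) * (a + c)) =
      c * b - e • (b * c) - e • (d * a - e • (a * d)) + (c * d - e • (d * c)) := by
  rcases he with rfl | rfl
  · simp only [one_smul, add_mul, mul_add] at h ⊢
    rw [h]; abel
  · simp only [neg_smul, one_smul, add_mul, mul_add] at h ⊢
    rw [h]; abel

end Helpers

set_option maxHeartbeats 2000000 in
/-- for a differential graded Lie algebra `L`, the universal enveloping
algebra `(𝕊L)^e` of the graded symmetric algebra of `L` (a differential graded Poisson
algebra) is isomorphic, as a differential graded algebra, to the universal enveloping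
algebra `U(L ⋊ L)` of the graded semidirect product, via `(x,y) ↦ m_{x} + h_{y}`. -/
theorem stmt_16 (k : Type u) [Field k] (V : Type u) [AddCommGroup V] [Module k V]
    (L : DGLAOn k V)
    (R : DGPAOn k (SymAlg L)) (hR : IsSymDGPA L R)
    (E : DGAOn k (Env R)) (hE : IsEnvDGA R E)
    (S : DGLAOn k (V × V)) (hS : IsSemidirect L S)
    (EU : DGAOn k (ULie S)) (hEU : IsULieDGA S EU) :
    ∃ φ : ULie S →ₗ[k] Env R,
      IsDGAHom EU E φ ∧ Function.Bijective φ ∧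
      ∀ x y : V, φ (uGen S (x, y)) = mgen R (sGen L x) + hgen R (sGen L y) := by
  obtain ⟨hsg, hSd, hSbr⟩ := hS
  have hLz : ∀ i, (0 : V) ∈ L.gr i := fun i => (L.gr i).zero_mem
  have hR' := hR
  obtain ⟨Rmul, Rone, Rgen, Rd, Rbr⟩ := hR
  obtain ⟨Emul, Eone, Em, Eh, Edm, Edh⟩ := hE
  obtain ⟨Umul, Uone, Ug, Ud⟩ := hEU
  -- relations in the enveloping algebra
  have m_mul : ∀ a b, mgen R (a * b) = mgen R a * mgen R b := by
    intro a b
    have := RingQuot.mkAlgHom_rel k (EnvRel.relmul (P := R) a b)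
    rw [Rmul, map_mul] at this
    exact this
  have m_one : mgen R 1 = 1 := by
    have := RingQuot.mkAlgHom_rel k (EnvRel.relone (P := R))
    rw [Rone, map_one] at this
    exact this
  have h_mul : ∀ {i j : ℤ} {a b : SymAlg L}, a ∈ R.gr i → b ∈ R.gr j →
      hgen R (a * b) = mgen R a * hgen R b + ((-1 : k) ^ (i * j)) • (mgen R b * hgen R a) := by
    intro i j a b ha hb
    have := RingQuot.mkAlgHom_rel k (EnvRel.relhmul (P := R) ha hb)
    rw [Rmul, map_add, map_smul, map_mul, map_mul] at this
    exact this
  have m_br : ∀ {i j : ℤ} {a b : SymAlg L}, a ∈ R.gr i → b ∈ R.gr j →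
      mgen R (R.br a b) = hgen R a * mgen R b - ((-1 : k) ^ (i * j)) • (mgen R b * hgen R a) := by
    intro i j a b ha hb
    have := RingQuot.mkAlgHom_rel k (EnvRel.relmbr (P := R) ha hb)
    rw [map_sub, map_smul, map_mul, map_mul] at this
    exact this
  have h_br : ∀ {i j : ℤ} {a b : SymAlg L}, a ∈ R.gr i → b ∈ R.gr j →
      hgen R (R.br a b) = hgen R a * hgen R b - ((-1 : k) ^ (i * j)) • (hgen R b * hgen R a) := by
    intro i j a b ha hb
    have := RingQuot.mkAlgHom_rel k (EnvRel.relhbr (P := R) ha hb)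
    rw [map_sub, map_smul, map_mul, map_mul] at this
    exact this
  -- relations in `U(L ⋊ L)`
  have u_rel : ∀ {i j : ℤ} {a b : V × V}, a ∈ S.gr i → b ∈ S.gr j →
      uGen S a * uGen S b - ((-1 : k) ^ (i * j)) • (uGen S b * uGen S a) =
        uGen S (S.br a b) := by
    intro i j a b ha hb
    have := RingQuot.mkAlgHom_rel k (LieRel.rel (L := S) ha hb)
    rw [map_sub, map_smul, map_mul, map_mul] at this
    exact this
  -- the forward map
  obtain ⟨φ, hφ⟩ : ∃ φ : ULie S →ₐ[k] Env R, ∀ z, φ (uGen S z) =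
      ((mgen R ∘ₗ sGen L).coprod (hgen R ∘ₗ sGen L)) z := by
    refine quot_lift ((mgen R ∘ₗ sGen L).coprod (hgen R ∘ₗ sGen L)) ?_
    rintro _ _ ⟨ha, hb⟩
    rename_i i j a b
    obtain ⟨x1, x2⟩ := a
    obtain ⟨y1, y2⟩ := b
    rw [hsg] at ha hb
    obtain ⟨hx1, hx2⟩ := ha
    obtain ⟨hy1, hy2⟩ := hb
    simp only at hx1 hx2 hy1 hy2
    rw [hSbr hx1 hx2 hy1 hy2]
    have e1 : mgen R (sGen L x1) * mgen R (sGen L y1) =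
        ((-1 : k) ^ (i * j)) • (mgen R (sGen L y1) * mgen R (sGen L x1)) := by
      rw [← m_mul, ← m_mul, ← map_smul, ← Rmul, ← Rmul, R.mul_comm (Rgen hx1) (Rgen hy1)]
    have e2 := m_br (Rgen hx2) (Rgen hy1)
    have e3 := m_br (Rgen hy2) (Rgen hx1)
    have e4 := h_br (Rgen hx2) (Rgen hy2)
    rw [Rbr] at e2 e3 e4
    rw [mul_comm j i] at e3
    simp only [map_sub, map_mul, map_smul, TensorAlgebra.lift_ι_apply, LinearMap.coprod_apply,
      LinearMap.comp_apply, e2, e3, e4]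
    generalize mgen R (sGen L x1) = a at *
    generalize mgen R (sGen L y1) = b at *
    generalize hgen R (sGen L x2) = c at *
    generalize hgen R (sGen L y2) = d at *
    exact sign_ident (k := k) _ (sgn_cases (i * j)) a b c d e1
  -- the backward map
  obtain ⟨ψ, hψ⟩ := core L R hR' (U := ULie S)
    (uGen S ∘ₗ LinearMap.inl k V V) (uGen S ∘ₗ LinearMap.inr k V V)
    (by
      intro i j x y hx hy
      have := u_rel (a := (x, 0)) (b := (y, 0)) (i := i) (j := j)
        (by rw [hsg]; exact ⟨hx, hLz i⟩) (by rw [hsg]; exact ⟨hy, hLz j⟩)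
      rw [hSbr hx (hLz i) hy (hLz j)] at this
      simp only [map_zero, LinearMap.zero_apply, smul_zero, sub_zero, Prod.mk_zero_zero] at this
      exact sub_eq_zero.mp this)
    (by
      intro i j x y hx hy
      have := u_rel (a := (0, x)) (b := (y, 0)) (i := i) (j := j)
        (by rw [hsg]; exact ⟨hLz i, hx⟩) (by rw [hsg]; exact ⟨hy, hLz j⟩)
      rw [hSbr (hLz i) hx hy (hLz j)] at this
      simp only [map_zero, LinearMap.zero_apply, smul_zero, sub_zero] at this
      exact this.symm)
    (by
      intro i j x y hx hy
      have := u_rel (a := (0, x)) (b := (0, y)) (i := i) (j := j)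
        (by rw [hsg]; exact ⟨hLz i, hx⟩) (by rw [hsg]; exact ⟨hLz j, hy⟩)
      rw [hSbr (hLz i) hx (hLz j) hy] at this
      simp only [map_zero, smul_zero, sub_zero] at this
      exact this.symm)
  have hφ' : ∀ x y, φ (uGen S (x, y)) = mgen R (sGen L x) + hgen R (sGen L y) := by
    intro x y; rw [hφ]; rfl
  have hψφ : ψ.comp φ = AlgHom.id k _ := by
    apply quot_hom_ext
    rintro ⟨x, y⟩
    change ψ (φ (uGen S (x, y))) = uGen S (x, y)
    rw [hφ', map_add, (hψ x).1, (hψ y).2]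
    change uGen S (x, 0) + uGen S (0, y) = _
    rw [← map_add]; simp
  have hφp : ∀ x, φ (ψ (mgen R (sGen L x))) = mgen R (sGen L x) := by
    intro x
    rw [(hψ x).1]
    change φ (uGen S (x, 0)) = _
    rw [hφ']; simp
  have hφq : ∀ x, φ (ψ (hgen R (sGen L x))) = hgen R (sGen L x) := by
    intro x
    rw [(hψ x).2]
    change φ (uGen S (0, x)) = _
    rw [hφ']; simp
  have one_mem : (1 : SymAlg L) ∈ R.gr 0 := Rone ▸ R.one_mem
  have Sgen : Algebra.adjoin k (Set.range (sGen L)) = ⊤ := quot_adjoin _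
  have h_one : hgen R 1 = 0 := by
    have := h_mul one_mem one_mem
    rw [mul_one, m_one, one_mul, mul_zero, zpow_zero, one_smul] at this
    exact left_eq_add.mp this
  have hm_id : ∀ a, φ (ψ (mgen R a)) = mgen R a := by
    intro a
    refine left_ind (sGen L) Sgen (LinearMap.eqLocus
      (φ.toLinearMap ∘ₗ ψ.toLinearMap ∘ₗ mgen R) (mgen R)) ?_ ?_ a
    · change φ (ψ (mgen R 1)) = mgen R 1
      rw [m_one, map_one, map_one]
    · intro x b hb
      change φ (ψ (mgen R b)) = mgen R b at hb
      change φ (ψ (mgen R (sGen L x * b))) = mgen R (sGen L x * b)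
      rw [m_mul, map_mul, map_mul, hb, hφp]
  have hh_id : ∀ a, φ (ψ (hgen R a)) = hgen R a := by
    intro a
    refine hom_top R.gr R.decomp (LinearMap.eqLocus
      (φ.toLinearMap ∘ₗ ψ.toLinearMap ∘ₗ hgen R) (hgen R)) ?_ a
    refine gr_ind R.gr R.decomp one_mem
      (by intro i j a b ha hb; rw [← Rmul]; exact R.mul_mem ha hb) L.gr L.decomp (sGen L) Rgen Sgen
      (fun _ => LinearMap.eqLocus
      (φ.toLinearMap ∘ₗ ψ.toLinearMap ∘ₗ hgen R) (hgen R)) ?_ ?_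
    · change φ (ψ (hgen R 1)) = hgen R 1
      rw [h_one, map_zero, map_zero]
    · intro i j x b hx hbj hb
      change φ (ψ (hgen R b)) = hgen R b at hb
      change φ (ψ (hgen R (sGen L x * b))) = hgen R (sGen L x * b)
      rw [h_mul (Rgen hx) hbj]
      simp only [map_add, map_smul, map_mul, hb, hφp, hφq, hm_id]
  have hφψ : φ.comp ψ = AlgHom.id k _ := by
    apply quot_hom_ext
    rintro ⟨a, b⟩
    have : (RingQuot.mkAlgHom k (EnvRel R)) ((TensorAlgebra.ι k) (a, b)) =
        mgen R a + hgen R b := by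
      have hab : ((a, b) : SymAlg L × SymAlg L) = (a, 0) + (0, b) := by simp
      rw [hab, map_add, map_add]; rfl
    rw [this]
    change φ (ψ (mgen R a + hgen R b)) = mgen R a + hgen R b
    rw [map_add, map_add, hm_id, hh_id]
  have Ugen : Algebra.adjoin k (Set.range (uGen S)) = ⊤ := quot_adjoin _
  have Uind := gr_ind EU.gr EU.decomp (Uone ▸ EU.one_mem)
      (by intro i j a b ha hb; rw [← Umul]; exact EU.mul_mem ha hb) S.gr S.decomp (uGen S) Ug Ugen
  have hφg : ∀ {i : ℤ} {z : V × V}, z ∈ S.gr i → φ (uGen S z) ∈ E.gr i := by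
    rintro i ⟨x, y⟩ hz
    rw [hsg] at hz
    rw [hφ']
    exact (E.gr i).add_mem (Em (Rgen hz.1)) (Eh (Rgen hz.2))
  have hdeg : ∀ n x, x ∈ EU.gr n → φ x ∈ E.gr n := by
    refine Uind (fun n => (E.gr n).comap φ.toLinearMap) ?_ ?_
    · change φ 1 ∈ E.gr 0
      rw [map_one, ← Eone]; exact E.one_mem
    · intro i j z b hz hb hbQ
      change φ b ∈ E.gr j at hbQ
      change φ (uGen S z * b) ∈ E.gr (i + j)
      rw [map_mul, ← Emul]
      exact E.mul_mem (hφg hz) hbQ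
  have Ed_one : E.d 1 = 0 := by
    have := E.d_mul E.one_mem E.one_mem
    rw [E.one_mul, E.mul_one, E.one_mul, zpow_zero, one_smul, Eone] at this
    exact left_eq_add.mp this
  have Ud_one : EU.d 1 = 0 := by
    have := EU.d_mul EU.one_mem EU.one_mem
    rw [EU.one_mul, EU.mul_one, EU.one_mul, zpow_zero, one_smul, Uone] at this
    exact left_eq_add.mp this
  have hφd : ∀ z, φ (EU.d (uGen S z)) = E.d (φ (uGen S z)) := by
    rintro ⟨x, y⟩
    rw [Ud, hSd, hφ', hφ', map_add, Edm, Edh, Rd, Rd]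
  have hd : ∀ x, φ (EU.d x) = E.d (φ x) := by
    intro x
    refine hom_top EU.gr EU.decomp (LinearMap.eqLocus
      (φ.toLinearMap ∘ₗ EU.d) (E.d ∘ₗ φ.toLinearMap)) ?_ x
    refine Uind (fun _ => LinearMap.eqLocus
      (φ.toLinearMap ∘ₗ EU.d) (E.d ∘ₗ φ.toLinearMap)) ?_ ?_
    · change φ (EU.d 1) = E.d (φ 1)
      rw [Ud_one, map_one, Ed_one, map_zero]
    · intro i j z b hz hb hbQ
      change φ (EU.d b) = E.d (φ b) at hbQ
      change φ (EU.d (uGen S z * b)) = E.d (φ (uGen S z * b))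
      have e1 := EU.d_mul (Ug hz) hb
      have e2 := E.d_mul (hφg hz) (hdeg j b hb)
      simp only [Umul] at e1
      simp only [Emul] at e2
      rw [e1, map_mul φ (uGen S z) b, e2, map_add φ, map_smul φ, map_mul φ, map_mul φ, hbQ, hφd]
  refine ⟨φ.toLinearMap, ⟨?_, ?_, ?_, ?_⟩, ?_, hφ'⟩
  · intro n x hx
    exact hdeg n x hx
  · intro x y
    rw [Umul, Emul]
    exact map_mul φ x y
  · rw [Uone, Eone]
    exact map_one φ
  · exact hd
  · exact Function.bijective_iff_has_inverse.mpr
      ⟨ψ, fun x => DFunLike.congr_fun hψφ x, fun x => DFunLike.congr_fun hφψ x⟩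

end DGPaper

end
end
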